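/- arXiv:1710.05209 — 6 statements merged into one kernel-verified Lean document; each statement's English description precedes it below -/
import Mathlib

section
/- For every m ∈ ℕ, every τ > 0, and every measurable map A sending each point of ℝ^m to a (Lebesgue-)measurable probability density function on ℝ, there exists a density f of the form f = (1−w)·N(μ₁,1) + w·N(μ₂,1) (a mixture of two one-dimensional Gaussian densities, both of unit variance) such that, if X₁,…,X_m are i.i.d. with density f, then KL(f ‖ A(X₁,…,X_m)) ≥ τ with probability at least 0.98. -/
/-!
The sample size is fixed, so the weight `w` of the second component can be taken so small that with
probability at least `0.99` no sample point comes from it; the sample then carries no information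
about the mean `k` of that component. Formally, the sample law of the mixture dominates
`(1 - w) ^ m` times the law `P` of `m` independent standard Gaussian points
(`pow_mul_pi_le_pi`).

Under `P`, the mass that the output density `A s` puts on `[k, ∞)` tends to `0` as `k → ∞`, so for
every `δ > 0` there is a `k` for which this mass is at most `δ` with `P`-probability at least `0.99`
(`exists_tail_le`). The mixture with second mean `k`, however, has mass at least `w * c` there,
where `c` is the mass of `N(0,1)` on `[0, ∞)`. Hence the divergence is of order `w * c * log (1 / δ)`
(`le_klDivFun`), which exceeds `τ` once `δ` is small; both `w` and `δ` are chosen before `k`.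
-/

open MeasureTheory ProbabilityTheory

/-- A (Lebesgue-)measurable probability density function on `ℝ`. -/
def IsDensity (f : ℝ → ℝ) : Prop :=
  Measurable f ∧ (∀ x, 0 ≤ f x) ∧ ∫ x, f x = 1

/-- Kullback–Leibler divergence `∫ f log(f/h)` between two densities on `ℝ`, defined to be
`+∞` if `{x | h x = 0 < f x}` has positive Lebesgue measure (or if the integral does not
exist). -/
noncomputable def klDivFun (f h : ℝ → ℝ) : EReal :=
  haveI := Classical.propDecidable
    (volume {x | h x = 0 ∧ 0 < f x} = 0 ∧
      Integrable (fun x => f x * Real.log (f x / h x)))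
  if volume {x | h x = 0 ∧ 0 < f x} = 0 ∧
      Integrable (fun x => f x * Real.log (f x / h x)) then
    ((∫ x, f x * Real.log (f x / h x) : ℝ) : EReal)
  else ⊤

/-- A quantitative form of the data-processing inequality for a set `I`. It is the integral of the
pointwise inequality `f * log (f / h) ≥ f * log u + f - u * h`, used with `u = t` on `I` and `u = 1`
off `I`. -/
lemma le_klDivFun {f h : ℝ → ℝ} (hfi : Integrable f) (hf1 : ∫ x, f x = 1) (hf : ∀ x, 0 < f x)
    (hh : IsDensity h) {I : Set ℝ} (hI : MeasurableSet I) {t : ℝ} (ht : 0 < t) :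
    (((∫ x in I, f x) * Real.log t - (t - 1) * ∫ x in I, h x : ℝ) : EReal) ≤ klDivFun f h := by
  unfold klDivFun
  split_ifs with hc
  swap
  · exact le_top
  obtain ⟨hnull, hint⟩ := hc
  obtain ⟨-, hh0, hh1⟩ := hh
  have hhi : Integrable h := by
    by_contra hn
    rw [integral_undef hn] at hh1
    exact zero_ne_one hh1
  rw [EReal.coe_le_coe_iff]
  have hpoint : ∀ x, h x ≠ 0 → ∀ u : ℝ, 0 < u →
      f x * Real.log u + f x - u * h x ≤ f x * Real.log (f x / h x) := by
    intro x hx u hu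
    have hhx : 0 < h x := lt_of_le_of_ne (hh0 x) (Ne.symm hx)
    have hfx := hf x
    have h1 := Real.one_sub_inv_le_log_of_pos (x := f x / h x / u) (by positivity)
    rw [Real.log_div (by positivity) hu.ne'] at h1
    have h2 := mul_le_mul_of_nonneg_left h1 hfx.le
    have h3 : f x * (1 - (f x / h x / u)⁻¹) = f x - u * h x := by
      field_simp
    rw [h3] at h2
    linarith
  have hle : ∫ x, (I.indicator (fun x => f x * Real.log t) x + f x
        - I.indicator (fun x => (t - 1) * h x) x - h x)
      ≤ ∫ x, f x * Real.log (f x / h x) := by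
    refine integral_mono_ae ?_ hint ?_
    · exact ((((hfi.mul_const _).indicator hI).add hfi).sub
        ((hhi.const_mul _).indicator hI)).sub hhi
    · have hae : ∀ᵐ x, h x ≠ 0 := by
        rw [ae_iff]
        refine measure_mono_null (fun x hx => ?_) hnull
        exact ⟨not_not.mp hx, hf x⟩
      filter_upwards [hae] with x hx
      by_cases hxI : x ∈ I
      · simp only [Set.indicator_of_mem hxI]
        linarith [hpoint x hx t ht]
      · simp only [Set.indicator_of_notMem hxI]
        have := hpoint x hx 1 one_pos
        simp only [Real.log_one] at this
        linarith
  refine le_trans (le_of_eq ?_) hle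
  have e1 : Integrable (I.indicator fun x => f x * Real.log t) :=
    (hfi.mul_const _).indicator hI
  have e2 : Integrable (I.indicator fun x => (t - 1) * h x) := (hhi.const_mul _).indicator hI
  have e3 : Integrable fun x => I.indicator (fun x => f x * Real.log t) x + f x := e1.add hfi
  have e4 : Integrable fun x => I.indicator (fun x => f x * Real.log t) x + f x
      - I.indicator (fun x => (t - 1) * h x) x := e3.sub e2
  rw [integral_sub e4 hhi, integral_sub e3 e2,
    integral_add e1 hfi, integral_indicator hI, integral_indicator hI, hf1, hh1,
    integral_mul_const, integral_const_mul]
  ring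

/-- If `μ` dominates `c • ν`, then the `m`-fold power of `μ` dominates `c ^ m` times that of `ν`.
No finiteness of `μ` is needed, since `Measure.pi μ` is the largest outer measure that is at most
the product of the side measures on every box. -/
lemma pow_mul_pi_le_pi {m : ℕ} {μ ν : Measure ℝ} [IsProbabilityMeasure ν] {c : ENNReal}
    (h : c • ν ≤ μ) {B : Set (Fin m → ℝ)} (hB : MeasurableSet B) :
    c ^ m * (Measure.pi fun _ : Fin m => ν) B ≤ (Measure.pi fun _ : Fin m => μ) B := by
  have key : c ^ m • (Measure.pi fun _ : Fin m => ν).toOuterMeasure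
      ≤ OuterMeasure.pi fun _ : Fin m => μ.toOuterMeasure := by
    rw [OuterMeasure.le_pi]
    intro s _
    have h1 : (c ^ m • (Measure.pi fun _ : Fin m => ν).toOuterMeasure) (Set.univ.pi s)
        = c ^ m * (Measure.pi fun _ : Fin m => ν) (Set.univ.pi s) := rfl
    rw [h1, Measure.pi_pi]
    calc c ^ m * ∏ i, ν (s i) = ∏ i, (c * ν (s i)) := by
          rw [Finset.prod_mul_distrib]; simp
      _ ≤ ∏ i, μ (s i) := Finset.prod_le_prod' fun i _ => h (s i)
  have h2 : (Measure.pi fun _ : Fin m => μ) B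
      = (OuterMeasure.pi fun _ : Fin m => μ.toOuterMeasure) B := by
    rw [Measure.pi, toMeasure_apply _ _ hB]
  rw [h2]
  exact key B

/-- The mass of the random density `A s` on `[k, ∞)` tends to `0` in probability as `k → ∞`. -/
lemma exists_tail_le {α : Type*} [MeasurableSpace α] (P : Measure α) [IsProbabilityMeasure P]
    {A : α → ℝ → ℝ} (hA : Measurable (Function.uncurry A)) (hd : ∀ s, IsDensity (A s))
    {δ p : ENNReal} (hδ : 0 < δ) (hp : p < 1) :
    ∃ k : ℕ, MeasurableSet {s | ∫⁻ x in Set.Ici (k : ℝ), ENNReal.ofReal (A s x) ≤ δ} ∧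
      p ≤ P {s | ∫⁻ x in Set.Ici (k : ℝ), ENNReal.ofReal (A s x) ≤ δ} := by
  set T : ℕ → Set α := fun k => {s | ∫⁻ x in Set.Ici (k : ℝ), ENNReal.ofReal (A s x) ≤ δ} with hT
  have hmeas : ∀ k, MeasurableSet (T k) := fun k =>
    measurableSet_le (Measurable.lintegral_prod_right' (f := fun q : α × ℝ =>
      ENNReal.ofReal (Function.uncurry A q)) hA.ennreal_ofReal) measurable_const
  have hanti : Antitone fun k : ℕ => Set.Ici (k : ℝ) := fun a b hab =>
    Set.Ici_subset_Ici.mpr (Nat.cast_le.mpr hab)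
  have hmono : Monotone T := fun a b hab s hs =>
    (lintegral_mono_set (hanti hab)).trans hs
  have hunion : ⋃ k, T k = Set.univ := by
    refine Set.eq_univ_of_forall fun s => Set.mem_iUnion.mpr ?_
    obtain ⟨-, h0, h1⟩ := hd s
    have hi : Integrable (A s) := by
      by_contra hn
      rw [integral_undef hn] at h1
      exact zero_ne_one h1
    have hfin : IsFiniteMeasure (volume.withDensity fun x => ENNReal.ofReal (A s x)) :=
      isFiniteMeasure_withDensity_ofReal hi.2
    have hlim := tendsto_measure_iInter_atTop
      (μ := volume.withDensity fun x => ENNReal.ofReal (A s x))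
      (s := fun k : ℕ => Set.Ici (k : ℝ)) (fun k => measurableSet_Ici.nullMeasurableSet) hanti
      ⟨0, measure_ne_top _ _⟩
    have hempty : ⋂ k : ℕ, Set.Ici (k : ℝ) = ∅ := by
      refine Set.eq_empty_of_forall_notMem fun x hx => ?_
      obtain ⟨n, hn⟩ := exists_nat_gt x
      exact absurd (Set.mem_iInter.mp hx n) (not_le.mpr hn)
    rw [hempty, measure_empty] at hlim
    obtain ⟨k, hk⟩ := (hlim.eventually_lt_const hδ).exists
    refine ⟨k, ?_⟩
    simp only [Function.comp_apply, withDensity_apply _ measurableSet_Ici] at hk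
    exact hk.le
  have hlim := tendsto_measure_iUnion_atTop (μ := P) hmono
  rw [hunion, measure_univ] at hlim
  obtain ⟨k, hk⟩ := (hlim.eventually_const_lt hp).exists
  exact ⟨k, hmeas k, hk.le⟩

/-- The mass of `N(k,1)` on `[k, ∞)` does not depend on `k`. -/
lemma setIntegral_Ici_gaussianPDFReal (k : ℝ) :
    ∫ x in Set.Ici k, gaussianPDFReal k 1 x = ∫ x in Set.Ici 0, gaussianPDFReal 0 1 x := by
  rw [← integral_indicator measurableSet_Ici, ← integral_indicator measurableSet_Ici,
    ← integral_add_right_eq_self _ k]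
  congr 1
  ext x
  by_cases hx : 0 ≤ x
  · rw [Set.indicator_of_mem (by simpa using hx), Set.indicator_of_mem (by simpa using hx)]
    simp [gaussianPDFReal]
  · rw [Set.indicator_of_notMem (by simpa using hx), Set.indicator_of_notMem (by simpa using hx)]

lemma setIntegral_Ici_gaussianPDFReal_pos : 0 < ∫ x in Set.Ici 0, gaussianPDFReal 0 1 x := by
  rw [setIntegral_pos_iff_support_of_nonneg_ae
    (Filter.Eventually.of_forall fun x => gaussianPDFReal_nonneg 0 1 x)
    (integrable_gaussianPDFReal 0 1).integrableOn]
  have : Function.support (gaussianPDFReal 0 1) = Set.univ :=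
    Set.eq_univ_of_forall fun x => (gaussianPDFReal_pos 0 1 x one_ne_zero).ne'
  simp [this]

/-- No algorithm can learn mixtures of two unit-variance Gaussians in KL divergence:
for any `m` and any `τ > 0` there is a mixture `f` of two unit-variance Gaussians such
that, on an i.i.d. sample of size `m` from `f`, the output of the algorithm has KL
divergence at least `τ` from `f` with probability at least `0.98`. -/
theorem kl_divergence_not_learnable :
    ∀ (m : ℕ) (τ : ℝ), 0 < τ →
      ∀ A : (Fin m → ℝ) → (ℝ → ℝ),
        Measurable (Function.uncurry A) → (∀ s, IsDensity (A s)) →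
        ∃ (w μ₁ μ₂ : ℝ), 0 ≤ w ∧ w ≤ 1 ∧
          (Measure.pi fun _ : Fin m =>
              volume.withDensity fun x =>
                ENNReal.ofReal ((1 - w) * gaussianPDFReal μ₁ 1 x + w * gaussianPDFReal μ₂ 1 x))
              {s | (τ : EReal) ≤
                klDivFun
                  (fun x => (1 - w) * gaussianPDFReal μ₁ 1 x + w * gaussianPDFReal μ₂ 1 x)
                  (A s)}
            ≥ ENNReal.ofReal 0.98 := by
  intro m τ hτ A hA hd
  have hm : (0 : ℝ) < m + 1 := by positivity
  -- By Bernoulli's inequality this weight gives `(1 - w) ^ m ≥ 0.99`.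
  obtain ⟨w, hw⟩ : ∃ w : ℝ, w = 0.01 / (m + 1) := ⟨_, rfl⟩
  have hw0 : 0 < w := by rw [hw]; positivity
  have hmw : m * w ≤ 0.01 := by
    rw [hw, mul_div_assoc', div_le_iff₀ hm]; nlinarith
  have hw1 : w < 1 := by
    rw [hw, div_lt_one hm]
    have : (0 : ℝ) ≤ m := Nat.cast_nonneg m
    linarith
  have hpow : 0.99 ≤ (1 - w) ^ m := by
    have := one_add_mul_le_pow (a := -w) (by linarith) m
    rw [← sub_eq_add_neg] at this
    linarith
  set c : ℝ := ∫ x in Set.Ici 0, gaussianPDFReal 0 1 x with hc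
  have hc0 : 0 < c := setIntegral_Ici_gaussianPDFReal_pos
  have hwc : 0 < w * c := mul_pos hw0 hc0
  -- With `δ = 1 / t` the divergence is at least `w * c * log t - 1 = τ`.
  set t : ℝ := Real.exp ((τ + 1) / (w * c)) with ht
  have ht0 : 0 < t := Real.exp_pos _
  have hlogt : Real.log t = (τ + 1) / (w * c) := Real.log_exp _
  obtain ⟨k, hkm, hk⟩ := exists_tail_le (Measure.pi fun _ : Fin m => gaussianReal 0 1) hA hd
    (δ := ENNReal.ofReal t⁻¹) (p := ENNReal.ofReal 0.99)
    (ENNReal.ofReal_pos.mpr (inv_pos.mpr ht0)) (by rw [ENNReal.ofReal_lt_one]; norm_num)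
  refine ⟨w, 0, k, hw0.le, hw1.le, ?_⟩
  set f : ℝ → ℝ := fun x => (1 - w) * gaussianPDFReal 0 1 x + w * gaussianPDFReal k 1 x with hf
  have hg0 : Integrable fun x => (1 - w) * gaussianPDFReal 0 1 x :=
    (integrable_gaussianPDFReal 0 1).const_mul _
  have hgk : Integrable fun x => w * gaussianPDFReal k 1 x :=
    (integrable_gaussianPDFReal k 1).const_mul _
  have hfi : Integrable f := hg0.add hgk
  have hf1 : ∫ x, f x = 1 := by
    rw [integral_add hg0 hgk, integral_const_mul, integral_const_mul,
      integral_gaussianPDFReal_eq_one 0 one_ne_zero,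
      integral_gaussianPDFReal_eq_one k one_ne_zero]
    ring
  have hfpos : ∀ x, 0 < f x := fun x =>
    add_pos (mul_pos (by linarith) (gaussianPDFReal_pos 0 1 x one_ne_zero))
      (mul_pos hw0 (gaussianPDFReal_pos k 1 x one_ne_zero))
  have hfI : w * c ≤ ∫ x in Set.Ici (k : ℝ), f x := by
    rw [hc, ← setIntegral_Ici_gaussianPDFReal k, ← integral_const_mul]
    refine setIntegral_mono hgk.integrableOn hfi.integrableOn fun x => ?_
    have := mul_nonneg (sub_nonneg.mpr hw1.le) (gaussianPDFReal_nonneg 0 1 x)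
    simp only [hf]
    linarith
  have hdom : ENNReal.ofReal (1 - w) • gaussianReal 0 1
      ≤ volume.withDensity fun x => ENNReal.ofReal (f x) := by
    rw [gaussianReal_of_var_ne_zero 0 one_ne_zero,
      ← withDensity_smul _ (measurable_gaussianPDF 0 1)]
    refine withDensity_mono (Filter.Eventually.of_forall fun x => ?_)
    simp only [Pi.smul_apply, smul_eq_mul, gaussianPDF]
    rw [← ENNReal.ofReal_mul (by linarith)]
    refine ENNReal.ofReal_le_ofReal ?_
    have := mul_nonneg hw0.le (gaussianPDFReal_nonneg k 1 x)
    simp only [hf]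
    linarith
  calc ENNReal.ofReal 0.98 ≤ ENNReal.ofReal (1 - w) ^ m * ENNReal.ofReal 0.99 := by
        rw [← ENNReal.ofReal_pow (by linarith), ← ENNReal.ofReal_mul (by positivity)]
        refine ENNReal.ofReal_le_ofReal ?_
        linarith
    _ ≤ ENNReal.ofReal (1 - w) ^ m * _ := by gcongr
    _ ≤ _ := pow_mul_pi_le_pi hdom hkm
    _ ≤ _ := measure_mono fun s hs => ?_
  have hsI : ∫ x in Set.Ici (k : ℝ), A s x ≤ t⁻¹ := by
    rw [integral_eq_lintegral_of_nonneg_ae (Filter.Eventually.of_forall (hd s).2.1)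
      (hd s).1.aestronglyMeasurable]
    exact ENNReal.toReal_le_of_le_ofReal (inv_nonneg.mpr ht0.le) hs
  have hsI0 : 0 ≤ ∫ x in Set.Ici (k : ℝ), A s x := integral_nonneg (hd s).2.1
  rw [Set.mem_ofPred_eq]
  refine le_trans ?_
    (le_klDivFun hfi hf1 hfpos (hd s) (measurableSet_Ici (a := (k : ℝ))) ht0)
  rw [EReal.coe_le_coe_iff]
  have h1 : τ + 1 ≤ (∫ x in Set.Ici (k : ℝ), f x) * Real.log t := by
    calc τ + 1 = w * c * Real.log t := by rw [hlogt]; field_simp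
      _ ≤ _ := mul_le_mul_of_nonneg_right hfI (by rw [hlogt]; positivity)
  have h2 : t * ∫ x in Set.Ici (k : ℝ), A s x ≤ 1 := by
    calc t * ∫ x in Set.Ici (k : ℝ), A s x ≤ t * t⁻¹ := by gcongr
      _ = 1 := mul_inv_cancel₀ ht0.ne'
  linarith
end

section
/- There exists an absolute constant c > 0 with the following property. Suppose d ≥ r ≥ 9 are integers with r dividing d. Then there is an integer M ≥ 2^{c·d²/r} and matrices U₁,…,U_M ∈ ℝ^{d × (d/r)}, each having orthonormal columns, such that ‖U_aᵀ U_b‖_F² ≤ d/(2r) for all a ≠ b. -/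
/-!
Write `s = d / r`, so that `9 * s ≤ d`, and let `Z` be a `d × s` matrix of independent uniform
signs divided by `√d` (`signMat`). All probabilities are normalised counts over sign arrays.

*Orthonormalisation.* Diagonalising `ZᵀZ = O H² Oᵀ` gives an orthonormal `U` with `Z = U H Oᵀ`,
where `H² = diag μ`. The scalar inequality `1 ≤ 2 μ + (μ - 1)²` then yields, for every `Q` with
orthonormal columns, `‖QᵀU‖² ≤ 2 ‖QᵀZ‖² + ‖ZᵀZ - 1‖²` (`exists_orthonormal_approx`). No lower bound
on the singular values of `Z` is needed.

*Second moment.* `E ‖ZᵀZ - 1‖² ≤ s² / d ≤ s / 9` (`sum_frobSq_gram`), so by Markov at least a ninth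
of all sign arrays satisfy `‖ZᵀZ - 1‖² ≤ s / 8`.

*Concentration.* For fixed `Q`, linearising the square in `exp (‖Qᵀx‖² / 4)` by a Gaussian integral
and using `cosh t ≤ exp (t² / 2)` gives `E exp (‖Qᵀx‖² / 4) ≤ √2 ^ s` for a random sign vector `x`
(`sum_exp_sq_proj_le`). Chernoff's bound over the `s` independent columns shows that
`‖QᵀZ‖² > 3 s / 16` has probability at most `exp (-d s / 128)` (`card_bad_le`).

Since `2 * (3 / 16) + 1 / 8 = 1 / 2`, a greedy selection (`card_greedy`) among the arrays with small
`‖ZᵀZ - 1‖²` produces at least `exp (d s / 128) / 9` subspaces. When `d s ≤ 1024` this count may be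
below `2`, and two orthogonal coordinate subspaces are used instead (`packing_pair`).
-/

open Matrix

/-- The squared Frobenius norm of a real matrix. -/
def frobSq {m n : ℕ} (A : Matrix (Fin m) (Fin n) ℝ) : ℝ :=
  ∑ i, ∑ j, A i j ^ 2


/-! ### Exponential moments of projections of sign vectors -/

lemma integrable_exp_quadratic (c : ℝ) :
    MeasureTheory.Integrable (fun x : ℝ => Real.exp (-Real.pi * x ^ 2 + c * x)) := by
  have h := ((integrable_exp_neg_mul_sq Real.pi_pos).comp_sub_right (c / (2 * Real.pi))).mul_const
    (Real.exp (c ^ 2 / (4 * Real.pi)))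
  refine h.congr (Filter.Eventually.of_forall fun x => ?_)
  simp only [← Real.exp_add]
  congr 1
  field_simp [Real.pi_ne_zero]
  ring

lemma integral_exp_quadratic (c : ℝ) :
    ∫ x : ℝ, Real.exp (-Real.pi * x ^ 2 + c * x) = Real.exp (c ^ 2 / (4 * Real.pi)) := by
  have h : ∀ x : ℝ, Real.exp (-Real.pi * x ^ 2 + c * x) =
      Real.exp (-Real.pi * (x - c / (2 * Real.pi)) ^ 2) * Real.exp (c ^ 2 / (4 * Real.pi)) := by
    intro x
    rw [← Real.exp_add]
    congr 1
    field_simp [Real.pi_ne_zero]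
    ring
  simp_rw [h]
  rw [MeasureTheory.integral_mul_const,
    MeasureTheory.integral_sub_right_eq_self (fun x : ℝ => Real.exp (-Real.pi * x ^ 2)),
    integral_gaussian, div_self Real.pi_ne_zero, Real.sqrt_one, one_mul]

/-- The subgaussian bound for the linear form `∑ i, t i * x i` in random signs, as a sum over all
`2 ^ d` sign vectors. -/
lemma sum_exp_signs_le {d : ℕ} (t : Fin d → ℝ) :
    ∑ x : Fin d → ℤˣ, Real.exp (∑ i, t i * ((x i : ℤ) : ℝ)) ≤
      2 ^ d * Real.exp ((∑ i, t i ^ 2) / 2) := by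
  have h : ∑ x : Fin d → ℤˣ, Real.exp (∑ i, t i * ((x i : ℤ) : ℝ)) =
      ∏ i, (2 * Real.cosh (t i)) := by
    simp_rw [Real.exp_sum]
    rw [← Fintype.piFinset_univ,
      Finset.sum_prod_piFinset Finset.univ (fun i (u : ℤˣ) => Real.exp (t i * ((u : ℤ) : ℝ)))]
    refine Finset.prod_congr rfl fun i _ => ?_
    rw [UnitsInt.univ, Finset.sum_pair (by decide), Real.cosh_eq]
    simp
    ring
  rw [h, Finset.prod_mul_distrib, Finset.sum_div, Real.exp_sum]
  simp only [Finset.prod_const, Finset.card_univ, Fintype.card_fin]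
  gcongr with i
  exact Real.cosh_le_exp_half_sq _

/-- Exponential moment of the squared norm of the projection of a random sign vector onto an
`s`-dimensional subspace. The square is linearised through
`exp (v² / 4) = ∫ exp (-π g² + √π v g) dg`, after which the signs can be averaged coordinatewise; the
value `√2` is `∫ exp (-π g² / 2) dg`. -/
lemma sum_exp_sq_proj_le {d s : ℕ} (Q : Matrix (Fin d) (Fin s) ℝ) (hQ : Qᵀ * Q = 1) :
    ∑ x : Fin d → ℤˣ, Real.exp ((∑ k, (∑ i, Q i k * ((x i : ℤ) : ℝ)) ^ 2) / 4) ≤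
      2 ^ d * √2 ^ s := by
  let v : (Fin d → ℤˣ) → Fin s → ℝ := fun x k => ∑ i, Q i k * ((x i : ℤ) : ℝ)
  have hlin : ∀ x, Real.exp ((∑ k, v x k ^ 2) / 4) =
      ∫ g : Fin s → ℝ, ∏ k, Real.exp (-Real.pi * g k ^ 2 + √Real.pi * v x k * g k) := by
    intro x
    rw [MeasureTheory.integral_fintype_prod_volume_eq_prod
      (fun k y => Real.exp (-Real.pi * y ^ 2 + √Real.pi * v x k * y))]
    simp_rw [integral_exp_quadratic]
    rw [Finset.sum_div, Real.exp_sum]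
    refine Finset.prod_congr rfl fun k _ => ?_
    rw [mul_pow, Real.sq_sqrt Real.pi_pos.le]
    congr 1
    field_simp [Real.pi_ne_zero]
  have hint : ∀ x, MeasureTheory.Integrable
      (fun g : Fin s → ℝ => ∏ k, Real.exp (-Real.pi * g k ^ 2 + √Real.pi * v x k * g k)) :=
    fun x => MeasureTheory.Integrable.fintype_prod
      (f := fun k y => Real.exp (-Real.pi * y ^ 2 + √Real.pi * v x k * y))
      fun k => integrable_exp_quadratic _
  have hint2 : MeasureTheory.Integrable
      (fun g : Fin s → ℝ => (2 : ℝ) ^ d * ∏ k, Real.exp (-(Real.pi / 2) * g k ^ 2)) :=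
    (MeasureTheory.Integrable.fintype_prod
      (f := fun _ y => Real.exp (-(Real.pi / 2) * y ^ 2))
      fun k => integrable_exp_neg_mul_sq (by positivity)).const_mul _
  have hval : ∫ g : Fin s → ℝ, (2 : ℝ) ^ d * ∏ k, Real.exp (-(Real.pi / 2) * g k ^ 2) =
      2 ^ d * √2 ^ s := by
    rw [MeasureTheory.integral_const_mul, MeasureTheory.integral_fintype_prod_volume_eq_pow
      (fun y : ℝ => Real.exp (-(Real.pi / 2) * y ^ 2)), integral_gaussian, Fintype.card_fin]
    congr 3
    field_simp [Real.pi_ne_zero]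
  -- `Q` is an isometry
  have hiso : ∀ g : Fin s → ℝ, ∑ i, (√Real.pi * (Q *ᵥ g) i) ^ 2 = Real.pi * ∑ k, g k ^ 2 := by
    intro g
    simp_rw [mul_pow, Real.sq_sqrt Real.pi_pos.le, ← Finset.mul_sum]
    congr 1
    have : (Q *ᵥ g) ⬝ᵥ (Q *ᵥ g) = g ⬝ᵥ g := by
      rw [Matrix.dotProduct_mulVec, Matrix.vecMul_mulVec, hQ, Matrix.vecMul_one]
    simpa [dotProduct, sq] using this
  calc ∑ x : Fin d → ℤˣ, Real.exp ((∑ k, (∑ i, Q i k * ((x i : ℤ) : ℝ)) ^ 2) / 4)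
      = ∑ x, ∫ g : Fin s → ℝ,
          ∏ k, Real.exp (-Real.pi * g k ^ 2 + √Real.pi * v x k * g k) :=
        Finset.sum_congr rfl fun x _ => hlin x
    _ = ∫ g : Fin s → ℝ, ∑ x,
          ∏ k, Real.exp (-Real.pi * g k ^ 2 + √Real.pi * v x k * g k) :=
        (MeasureTheory.integral_finsetSum _ fun x _ => hint x).symm
    _ ≤ ∫ g : Fin s → ℝ, (2 : ℝ) ^ d * ∏ k, Real.exp (-(Real.pi / 2) * g k ^ 2) := by
        refine MeasureTheory.integral_mono
          (MeasureTheory.integrable_finsetSum _ fun x _ => hint x) hint2 fun g => ?_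
        have hx : ∀ x, ∏ k, Real.exp (-Real.pi * g k ^ 2 + √Real.pi * v x k * g k) =
            Real.exp (-Real.pi * ∑ k, g k ^ 2) *
              Real.exp (∑ i, (√Real.pi * (Q *ᵥ g) i) * ((x i : ℤ) : ℝ)) := by
          intro x
          rw [← Real.exp_sum, ← Real.exp_add, Finset.sum_add_distrib, Finset.mul_sum]
          congr 2
          simp only [v, Matrix.mulVec, dotProduct, Finset.mul_sum, Finset.sum_mul]
          rw [Finset.sum_comm]
          refine Finset.sum_congr rfl fun i _ => Finset.sum_congr rfl fun k _ => by ring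
        simp only [hx]
        rw [← Finset.mul_sum, ← Real.exp_sum, ← Finset.mul_sum]
        refine (mul_le_mul_of_nonneg_left (sum_exp_signs_le _) (Real.exp_pos _).le).trans_eq ?_
        rw [hiso, mul_left_comm, ← Real.exp_add]
        congr 2
        ring
    _ = 2 ^ d * √2 ^ s := hval

/-! ### Orthonormalisation in Frobenius norm -/

lemma frobSq_eq_trace {m n : ℕ} (A : Matrix (Fin m) (Fin n) ℝ) :
    frobSq A = (Aᵀ * A).trace := by
  simp only [frobSq, Matrix.trace, Matrix.diag, Matrix.mul_apply, Matrix.transpose_apply, sq]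
  exact Finset.sum_comm

lemma frobSq_transpose {m n : ℕ} (A : Matrix (Fin m) (Fin n) ℝ) : frobSq Aᵀ = frobSq A := by
  simp only [frobSq, Matrix.transpose_apply]
  exact Finset.sum_comm

lemma frobSq_mul_orthogonal {m n : ℕ} (A : Matrix (Fin m) (Fin n) ℝ)
    (O : Matrix (Fin n) (Fin n) ℝ) (hO : O * Oᵀ = 1) : frobSq (A * O) = frobSq A := by
  rw [← frobSq_transpose, frobSq_eq_trace, ← frobSq_transpose A, frobSq_eq_trace]
  simp only [Matrix.transpose_mul, Matrix.transpose_transpose]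
  rw [Matrix.mul_assoc, ← Matrix.mul_assoc O, hO, Matrix.one_mul]

/-- The spectral theorem for a real symmetric matrix, in terms of transposes. -/
lemma exists_spectral {n : ℕ} (A : Matrix (Fin n) (Fin n) ℝ) (hA : Aᵀ = A) :
    ∃ (O : Matrix (Fin n) (Fin n) ℝ) (μ : Fin n → ℝ),
      O * Oᵀ = 1 ∧ Oᵀ * O = 1 ∧ Oᵀ * A * O = Matrix.diagonal μ := by
  have hH : A.IsHermitian := by simpa [Matrix.IsHermitian] using hA
  refine ⟨hH.eigenvectorUnitary, hH.eigenvalues, ?_, ?_, ?_⟩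
  · exact Matrix.mem_unitaryGroup_iff.1 hH.eigenvectorUnitary.2
  · exact Matrix.mem_unitaryGroup_iff'.1 hH.eigenvectorUnitary.2
  · have := hH.conjStarAlgAut_star_eigenvectorUnitary
    rw [Unitary.conjStarAlgAut_star_apply] at this
    exact this

/-- Bessel's inequality for the columns of `Q`. -/
lemma norm_transpose_mulVec_le {d s : ℕ} (Q : Matrix (Fin d) (Fin s) ℝ) (hQ : Qᵀ * Q = 1)
    (u : Fin d → ℝ) : ∑ l, (Qᵀ *ᵥ u) l ^ 2 ≤ ∑ i, u i ^ 2 := by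
  have h0 : 0 ≤ (u - Q *ᵥ (Qᵀ *ᵥ u)) ⬝ᵥ (u - Q *ᵥ (Qᵀ *ᵥ u)) :=
    Finset.sum_nonneg fun i _ => mul_self_nonneg _
  have h1 : u ⬝ᵥ (Q *ᵥ (Qᵀ *ᵥ u)) = (Qᵀ *ᵥ u) ⬝ᵥ (Qᵀ *ᵥ u) := by
    rw [Matrix.dotProduct_mulVec, ← Matrix.mulVec_transpose]
  have h2 : (Q *ᵥ (Qᵀ *ᵥ u)) ⬝ᵥ (Q *ᵥ (Qᵀ *ᵥ u)) = (Qᵀ *ᵥ u) ⬝ᵥ (Qᵀ *ᵥ u) := by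
    rw [Matrix.dotProduct_mulVec, Matrix.vecMul_mulVec, hQ, Matrix.vecMul_one]
  have h3 : (Q *ᵥ (Qᵀ *ᵥ u)) ⬝ᵥ u = (Qᵀ *ᵥ u) ⬝ᵥ (Qᵀ *ᵥ u) := by
    rw [dotProduct_comm, h1]
  rw [sub_dotProduct, dotProduct_sub, dotProduct_sub, h1, h2, h3] at h0
  simp only [dotProduct] at h0
  simp only [sq]
  linarith

/-- A matrix with pairwise orthogonal columns, possibly zero, is an orthonormal system with rescaled
columns; zero columns are replaced by vectors completing the system, which requires `s ≤ d`. -/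
lemma exists_orthonormal_factor {d s : ℕ} (hsd : s ≤ d) (T : Matrix (Fin d) (Fin s) ℝ)
    (μ : Fin s → ℝ) (hT : Tᵀ * T = Matrix.diagonal μ) :
    ∃ U : Matrix (Fin d) (Fin s) ℝ, Uᵀ * U = 1 ∧ ∀ i k, T i k = √(μ k) * U i k := by
  have hin : ∀ k l, ∑ i, T i k * T i l = if k = l then μ k else 0 := by
    intro k l
    have := congrFun (congrFun hT k) l
    simpa [Matrix.mul_apply, Matrix.diagonal_apply] using this
  have hμ : ∀ k, 0 ≤ μ k := fun k => by
    have := hin k k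
    simp only [if_true] at this
    rw [← this]
    exact Finset.sum_nonneg fun i _ => mul_self_nonneg _
  let w : Fin s → EuclideanSpace ℝ (Fin d) := fun k => WithLp.toLp 2 fun i => (√(μ k))⁻¹ * T i k
  let v : Fin s ⊕ Fin (d - s) → EuclideanSpace ℝ (Fin d) := Sum.elim w 0
  let S : Set (Fin s ⊕ Fin (d - s)) := Sum.inl '' {k | μ k ≠ 0}
  have h1 : ∀ k l, inner ℝ (w k) (w l) = (√(μ k))⁻¹ * (√(μ l))⁻¹ * ∑ i, T i k * T i l := by
    intro k l
    simp only [PiLp.inner_apply, w, Finset.mul_sum, RCLike.inner_apply, conj_trivial]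
    exact Finset.sum_congr rfl fun i _ => by ring
  have hv : Orthonormal ℝ (S.domRestrict v) := by
    rw [orthonormal_iff_ite]
    intro a b
    obtain ⟨k, hk, hka⟩ := a.2
    obtain ⟨l, hl, hlb⟩ := b.2
    have hva : S.domRestrict v a = w k := by rw [Set.domRestrict_apply, ← hka]; rfl
    have hvb : S.domRestrict v b = w l := by rw [Set.domRestrict_apply, ← hlb]; rfl
    have hab : a = b ↔ k = l := by rw [Subtype.ext_iff, ← hka, ← hlb, Sum.inl.injEq]
    simp only [hva, hvb, hab, h1, hin]
    split_ifs with h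
    · subst h
      rw [← mul_inv, Real.mul_self_sqrt (hμ k), inv_mul_cancel₀ hk]
    · simp
  obtain ⟨b, hb⟩ := hv.exists_orthonormalBasis_extension_of_card_eq
    (by simp [Nat.add_sub_cancel' hsd])
  refine ⟨Matrix.of fun i k => b (Sum.inl k) i, ?_, fun i k => ?_⟩
  · ext k l
    have := (orthonormal_iff_ite.1 b.orthonormal) (Sum.inl k) (Sum.inl l)
    simp only [PiLp.inner_apply, RCLike.inner_apply, conj_trivial, Sum.inl.injEq] at this
    simp only [Matrix.mul_apply, Matrix.transpose_apply, Matrix.of_apply, Matrix.one_apply]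
    rw [← this]
    exact Finset.sum_congr rfl fun i _ => by ring
  · by_cases hk : μ k = 0
    · have h0 := hin k k
      rw [if_pos rfl, hk] at h0
      have := (Finset.sum_eq_zero_iff_of_nonneg fun i _ => mul_self_nonneg (T i k)).1 h0 i
        (Finset.mem_univ i)
      simp [hk, mul_self_eq_zero.1 this]
    · rw [Matrix.of_apply, hb (Sum.inl k) ⟨k, hk, rfl⟩]
      have : √(μ k) ≠ 0 := (Real.sqrt_pos.2 (lt_of_le_of_ne (hμ k) (Ne.symm hk))).ne'
      simp [v, w, this]

/-- The orthonormal factor `U` of `Z` correlates with any orthonormal `Q` at most as much as `Z` does,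
up to a factor `2` and the defect of orthonormality of `Z`. -/
lemma exists_orthonormal_approx {d s : ℕ} (hsd : s ≤ d) (Z : Matrix (Fin d) (Fin s) ℝ) :
    ∃ U : Matrix (Fin d) (Fin s) ℝ, Uᵀ * U = 1 ∧
      ∀ Q : Matrix (Fin d) (Fin s) ℝ, Qᵀ * Q = 1 →
        frobSq (Qᵀ * U) ≤ 2 * frobSq (Qᵀ * Z) + frobSq (Zᵀ * Z - 1) := by
  obtain ⟨O, μ, hO, hO', hd⟩ := exists_spectral (Zᵀ * Z) (by simp)
  have hT : (Z * O)ᵀ * (Z * O) = Matrix.diagonal μ := by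
    rw [← hd, Matrix.transpose_mul]
    simp only [Matrix.mul_assoc]
  obtain ⟨U, hU, hTU⟩ := exists_orthonormal_factor hsd (Z * O) μ hT
  have hμ : ∀ k, 0 ≤ μ k := fun k => by
    have := congrFun (congrFun hT k) k
    rw [Matrix.diagonal_apply_eq] at this
    rw [← this, Matrix.mul_apply]
    exact Finset.sum_nonneg fun i _ => mul_self_nonneg _
  refine ⟨U, hU, fun Q hQ => ?_⟩
  have e1 : frobSq (Qᵀ * Z) = ∑ k, μ k * ∑ l, (Qᵀ * U) l k ^ 2 := by
    rw [← frobSq_mul_orthogonal _ O hO, Matrix.mul_assoc, frobSq, Finset.sum_comm]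
    refine Finset.sum_congr rfl fun k _ => ?_
    rw [Finset.mul_sum]
    refine Finset.sum_congr rfl fun l _ => ?_
    have : (Qᵀ * (Z * O)) l k = √(μ k) * (Qᵀ * U) l k := by
      rw [Matrix.mul_apply, Matrix.mul_apply, Finset.mul_sum]
      refine Finset.sum_congr rfl fun i _ => ?_
      rw [hTU]
      ring
    rw [this, mul_pow, Real.sq_sqrt (hμ k)]
  have e2 : frobSq (Zᵀ * Z - 1) = ∑ k, (μ k - 1) ^ 2 := by
    rw [← frobSq_mul_orthogonal _ O hO, ← frobSq_transpose,
      ← frobSq_mul_orthogonal _ O hO, ← frobSq_transpose]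
    have : (((Zᵀ * Z - 1) * O)ᵀ * O)ᵀ = Matrix.diagonal fun k => μ k - 1 := by
      rw [Matrix.transpose_mul, Matrix.transpose_transpose, ← Matrix.mul_assoc, Matrix.mul_sub,
        Matrix.sub_mul, hd, Matrix.mul_one, hO', ← Matrix.diagonal_one, Matrix.diagonal_sub]
    rw [this, frobSq]
    refine Finset.sum_congr rfl fun k _ => ?_
    rw [Finset.sum_eq_single k]
    · simp
    · intro l _ hl
      simp [Matrix.diagonal_apply_ne _ hl.symm]
    · simp
  rw [e1, e2, frobSq, Finset.sum_comm, Finset.mul_sum, ← Finset.sum_add_distrib]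
  refine Finset.sum_le_sum fun k _ => ?_
  have hb : ∑ l, (Qᵀ * U) l k ^ 2 ≤ 1 := by
    have h := norm_transpose_mulVec_le Q hQ (fun i => U i k)
    have h1 : ∑ i, U i k ^ 2 = 1 := by
      have := congrFun (congrFun hU k) k
      simpa [Matrix.mul_apply, sq] using this
    rw [h1] at h
    exact h
  have hb0 : 0 ≤ ∑ l, (Qᵀ * U) l k ^ 2 := Finset.sum_nonneg fun _ _ => sq_nonneg _
  -- the scalar inequality `1 ≤ 2 * μ + (μ - 1) ^ 2`, weighted by a number in `[0, 1]`
  nlinarith [mul_nonneg hb0 (sq_nonneg (μ k)), mul_nonneg (sub_nonneg.2 hb) (sq_nonneg (μ k - 1))]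

/-! ### Random sign matrices -/

/-- The `d × s` matrix whose `j`-th column is the sign vector `x j` divided by `√d`. Signs are units
of `ℤ`, so that flipping signs is multiplication in the group of sign arrays. -/
noncomputable def signMat {d s : ℕ} (x : Fin s → Fin d → ℤˣ) : Matrix (Fin d) (Fin s) ℝ :=
  Matrix.of fun i j => ((x j i : ℤ) : ℝ) / √d

/-- Flipping the single sign `x j i` negates the summand, so the sum vanishes. -/
lemma sum_sign_quad {d s : ℕ} {j k : Fin s} (hjk : j ≠ k) {i l : Fin d} (hil : i ≠ l) :
    ∑ x : Fin s → Fin d → ℤˣ,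
      ((x j i : ℤ) : ℝ) * ((x k i : ℤ) : ℝ) * (((x j l : ℤ) : ℝ) * ((x k l : ℤ) : ℝ)) = 0 := by
  let g : Fin s → Fin d → ℤˣ := fun a b => if a = j ∧ b = i then -1 else 1
  have h := Equiv.sum_comp (Equiv.mulLeft g) fun x : Fin s → Fin d → ℤˣ =>
    ((x j i : ℤ) : ℝ) * ((x k i : ℤ) : ℝ) * (((x j l : ℤ) : ℝ) * ((x k l : ℤ) : ℝ))
  have hg : ∀ x : Fin s → Fin d → ℤˣ,
      (((Equiv.mulLeft g x) j i : ℤ) : ℝ) * (((Equiv.mulLeft g x) k i : ℤ) : ℝ) *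
      ((((Equiv.mulLeft g x) j l : ℤ) : ℝ) * (((Equiv.mulLeft g x) k l : ℤ) : ℝ)) =
      -(((x j i : ℤ) : ℝ) * ((x k i : ℤ) : ℝ) * (((x j l : ℤ) : ℝ) * ((x k l : ℤ) : ℝ))) := by
    intro x
    simp [g, hjk.symm, hil.symm]
  simp_rw [hg, Finset.sum_neg_distrib] at h
  linarith

lemma sign_sq (u : ℤˣ) : ((u : ℤ) : ℝ) * ((u : ℤ) : ℝ) = 1 := by
  rcases Int.units_eq_one_or u with rfl | rfl <;> simp

lemma card_signs (d s : ℕ) : (Fintype.card (Fin s → Fin d → ℤˣ) : ℝ) = 2 ^ (d * s) := by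
  simp [pow_mul]

/-- Second moment of the Gram matrix: off-diagonal entries of `ZᵀZ` have variance `1 / d`, diagonal
entries are exactly `1`. -/
lemma sum_frobSq_gram {d s : ℕ} (hd : 0 < d) :
    ∑ x : Fin s → Fin d → ℤˣ, frobSq ((signMat x)ᵀ * signMat x - 1) ≤
      2 ^ (d * s) * ((s : ℝ) ^ 2 / d) := by
  have hd' : (0 : ℝ) < d := by exact_mod_cast hd
  have hent : ∀ (x : Fin s → Fin d → ℤˣ) (j k : Fin s), ((signMat x)ᵀ * signMat x) j k =
      (∑ i, ((x j i : ℤ) : ℝ) * ((x k i : ℤ) : ℝ)) / d := by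
    intro x j k
    simp only [signMat, Matrix.mul_apply, Matrix.transpose_apply, Matrix.of_apply]
    rw [Finset.sum_div]
    refine Finset.sum_congr rfl fun i _ => ?_
    rw [div_mul_div_comm, Real.mul_self_sqrt hd'.le]
  have key : ∀ j k : Fin s, ∑ x : Fin s → Fin d → ℤˣ,
      (((signMat x)ᵀ * signMat x - 1 : Matrix (Fin s) (Fin s) ℝ) j k) ^ 2 ≤
        2 ^ (d * s) * (1 / d) := by
    intro j k
    by_cases hjk : j = k
    · subst hjk
      rw [Finset.sum_eq_zero]
      · positivity
      · intro x _
        rw [Matrix.sub_apply, hent]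
        simp [sign_sq, hd'.ne']
    · have h1 : ∀ x : Fin s → Fin d → ℤˣ,
          (((signMat x)ᵀ * signMat x - 1 : Matrix (Fin s) (Fin s) ℝ) j k) ^ 2 =
          (∑ i, ∑ l, ((x j i : ℤ) : ℝ) * ((x k i : ℤ) : ℝ) *
            (((x j l : ℤ) : ℝ) * ((x k l : ℤ) : ℝ))) / d ^ 2 := by
        intro x
        rw [Matrix.sub_apply, hent, Matrix.one_apply_ne hjk, sub_zero, div_pow, sq,
          Finset.sum_mul_sum]
      simp_rw [h1]
      rw [← Finset.sum_div, Finset.sum_comm]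
      have h2 : ∀ i : Fin d, ∑ x : Fin s → Fin d → ℤˣ, ∑ l, ((x j i : ℤ) : ℝ) * ((x k i : ℤ) : ℝ) *
            (((x j l : ℤ) : ℝ) * ((x k l : ℤ) : ℝ)) = 2 ^ (d * s) := by
        intro i
        rw [Finset.sum_comm, Finset.sum_eq_single i]
        · rw [← card_signs]
          have : ∀ x : Fin s → Fin d → ℤˣ, ((x j i : ℤ) : ℝ) * ((x k i : ℤ) : ℝ) *
            (((x j i : ℤ) : ℝ) * ((x k i : ℤ) : ℝ)) = 1 := by
            intro x
            rw [mul_mul_mul_comm, sign_sq, sign_sq, one_mul]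
          simp only [this, Finset.sum_const, nsmul_eq_mul, mul_one, Finset.card_univ]
        · intro l _ hl
          exact sum_sign_quad hjk hl.symm
        · simp
      simp_rw [h2]
      simp only [Finset.sum_const, Finset.card_univ, Fintype.card_fin, nsmul_eq_mul]
      apply le_of_eq
      field_simp
  simp only [frobSq]
  rw [Finset.sum_comm]
  calc _ = ∑ j : Fin s, ∑ k : Fin s, ∑ x : Fin s → Fin d → ℤˣ,
      (((signMat x)ᵀ * signMat x - 1 : Matrix (Fin s) (Fin s) ℝ) j k) ^ 2 :=
        Finset.sum_congr rfl fun j _ => Finset.sum_comm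
    _ ≤ ∑ j : Fin s, ∑ k : Fin s, (2 : ℝ) ^ (d * s) * (1 / d) :=
        Finset.sum_le_sum fun j _ => Finset.sum_le_sum fun k _ => key j k
    _ = _ := by
      simp only [Finset.sum_const, Finset.card_univ, Fintype.card_fin, nsmul_eq_mul]
      ring

/-! ### Greedy selection -/

/-- If each element of `G` conflicts with at most `B` elements of `G`, then a maximal conflict-free
subset has at least `G.card / B` elements. -/
lemma card_greedy {α : Type*} [Fintype α] [DecidableEq α] (G : Finset α) (R : α → α → Prop)
    [DecidableRel R] (hrefl : ∀ x, R x x) (hsymm : ∀ x y, R x y → R y x) (B : ℝ)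
    (hB : ∀ x ∈ G, ((G.filter (R x)).card : ℝ) ≤ B) :
    ∃ S : Finset α, S ⊆ G ∧ (∀ x ∈ S, ∀ y ∈ S, x ≠ y → ¬ R x y) ∧ (G.card : ℝ) ≤ S.card * B := by
  let F : Finset (Finset α) := G.powerset.filter fun S => ∀ x ∈ S, ∀ y ∈ S, x ≠ y → ¬ R x y
  obtain ⟨S, hS⟩ := F.exists_maximal ⟨∅, by simp [F]⟩
  have hSF := hS.1
  simp only [F, Finset.mem_filter, Finset.mem_powerset] at hSF
  refine ⟨S, hSF.1, hSF.2, ?_⟩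
  have hcov : G ⊆ S.biUnion fun x => G.filter (R x) := by
    intro y hy
    by_contra hcon
    simp only [Finset.mem_biUnion, Finset.mem_filter, not_exists, not_and] at hcon
    have hno : ∀ x ∈ S, ¬ R x y := fun x hx => hcon x hx hy
    have hyS : y ∉ S := fun h => hno y h (hrefl y)
    refine hyS (hS.2 (y := insert y S) ?_ (Finset.subset_insert _ _) (Finset.mem_insert_self _ _))
    simp only [F, Finset.mem_filter, Finset.mem_powerset]
    refine ⟨Finset.insert_subset hy hSF.1, fun a ha b hb hab => ?_⟩
    rcases Finset.mem_insert.1 ha with hay | haS <;> rcases Finset.mem_insert.1 hb with hby | hbS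
    · exact absurd (hay.trans hby.symm) hab
    · exact fun h => hno b hbS (hsymm _ _ (hay ▸ h))
    · exact fun h => hno a haS (hby ▸ h)
    · exact hSF.2 a haS b hbS hab
  calc (G.card : ℝ) ≤ ((S.biUnion fun x => G.filter (R x)).card : ℝ) := by
        exact_mod_cast Finset.card_le_card hcov
    _ ≤ ∑ x ∈ S, ((G.filter (R x)).card : ℝ) := by exact_mod_cast Finset.card_biUnion_le
    _ ≤ ∑ x ∈ S, B := Finset.sum_le_sum fun x hx => hB x (hSF.1 hx)
    _ = S.card * B := by simp

/-! ### Packing subspaces -/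

/-- Chernoff bound: for a fixed `s`-dimensional subspace, few sign matrices have large projection
onto it. The exponents combine through `3 / 64 - 5 / 128 = 1 / 128`. -/
lemma card_bad_le {d s : ℕ} (h9 : 9 * s ≤ d) (Q : Matrix (Fin d) (Fin s) ℝ) (hQ : Qᵀ * Q = 1) :
    ((Finset.univ.filter fun x : Fin s → Fin d → ℤˣ =>
      3 / 16 * (s : ℝ) < frobSq (Qᵀ * signMat x)).card : ℝ) ≤
      2 ^ (d * s) * Real.exp (-((d : ℝ) * s / 128)) := by
  rcases Nat.eq_zero_or_pos s with rfl | hs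
  · simp [frobSq]
  have hd : (0 : ℝ) < d := by
    have : 0 < d := by omega
    exact_mod_cast this
  have h9' : (9 : ℝ) * s ≤ d := by exact_mod_cast h9
  have hs0 : (0 : ℝ) ≤ s := Nat.cast_nonneg s
  set bad := Finset.univ.filter fun x : Fin s → Fin d → ℤˣ =>
      3 / 16 * (s : ℝ) < frobSq (Qᵀ * signMat x) with hbad
  let f : (Fin d → ℤˣ) → ℝ := fun y => (∑ k, (∑ i, Q i k * ((y i : ℤ) : ℝ)) ^ 2) / 4
  have hf : ∀ x : Fin s → Fin d → ℤˣ, ∑ j, f (x j) = d / 4 * frobSq (Qᵀ * signMat x) := by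
    intro x
    rw [frobSq, Finset.sum_comm, Finset.mul_sum]
    refine Finset.sum_congr rfl fun j _ => ?_
    simp only [f]
    rw [Finset.sum_div, Finset.mul_sum]
    refine Finset.sum_congr rfl fun k _ => ?_
    have : (Qᵀ * signMat x) k j = (∑ i, Q i k * ((x j i : ℤ) : ℝ)) / √d := by
      rw [Matrix.mul_apply, Finset.sum_div]
      refine Finset.sum_congr rfl fun i _ => ?_
      simp only [Matrix.transpose_apply, signMat, Matrix.of_apply]
      ring
    rw [this, div_pow, Real.sq_sqrt hd.le]
    field_simp
  have hmark : (bad.card : ℝ) * Real.exp (3 * (d * s) / 64) ≤ (2 ^ d * √2 ^ s) ^ s := by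
    calc (bad.card : ℝ) * Real.exp (3 * (d * s) / 64)
        = ∑ x ∈ bad, Real.exp (3 * (d * s) / 64) := by simp
      _ ≤ ∑ x ∈ bad, Real.exp (∑ j, f (x j)) := by
          refine Finset.sum_le_sum fun x hx => Real.exp_le_exp.2 ?_
          rw [hbad, Finset.mem_filter] at hx
          rw [hf]
          nlinarith [mul_le_mul_of_nonneg_left hx.2.le hd.le]
      _ ≤ ∑ x : Fin s → Fin d → ℤˣ, Real.exp (∑ j, f (x j)) :=
          Finset.sum_le_sum_of_subset_of_nonneg (Finset.subset_univ _)
            fun x _ _ => (Real.exp_pos _).le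
      _ = (∑ y : Fin d → ℤˣ, Real.exp (f y)) ^ s := by
          simp_rw [Real.exp_sum]
          rw [← Fintype.piFinset_univ,
            Finset.sum_prod_piFinset Finset.univ (fun _ y => Real.exp (f y))]
          simp
      _ ≤ (2 ^ d * √2 ^ s) ^ s := by
          gcongr
          exact sum_exp_sq_proj_le Q hQ
  have hsqrt : √2 ^ (s * s) ≤ Real.exp (5 * (d * s) / 128) := by
    -- `s * s ≤ d * s / 9` and `log 2 / 18 ≤ 0.7 / 18 ≤ 5 / 128`
    have : √2 = Real.exp (Real.log 2 / 2) := by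
      rw [Real.exp_half, Real.exp_log two_pos]
    rw [this, ← Real.exp_nat_mul]
    apply Real.exp_le_exp.2
    push_cast
    have hl : Real.log 2 ≤ 0.7 := Real.log_two_lt_d9.le.trans (by norm_num)
    have : (s : ℝ) * s * (Real.log 2 / 2) ≤ s * s * (0.7 / 2) := by gcongr
    nlinarith [mul_le_mul_of_nonneg_left h9' hs0]
  have hpos := Real.exp_pos (3 * ((d : ℝ) * s) / 64)
  refine le_of_mul_le_mul_right (hmark.trans ?_) hpos
  rw [mul_pow, ← pow_mul, ← pow_mul, mul_assoc, ← Real.exp_add]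
  gcongr
  refine hsqrt.trans_eq ?_
  congr 1
  ring

lemma frobSq_one {s : ℕ} : frobSq (1 : Matrix (Fin s) (Fin s) ℝ) = s := by
  rw [frobSq_eq_trace]
  simp

lemma packing_greedy {d s : ℕ} (hs : 0 < s) (h9 : 9 * s ≤ d) :
    ∃ M : ℕ, Real.exp ((d : ℝ) * s / 128) ≤ 9 * (M : ℝ) ∧
      ∃ U : Fin M → Matrix (Fin d) (Fin s) ℝ,
        (∀ a, (U a)ᵀ * U a = 1) ∧
        (∀ a b, a ≠ b → frobSq ((U a)ᵀ * U b) ≤ (s : ℝ) / 2) := by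
  classical
  have hd : 0 < d := by omega
  have hd' : (0 : ℝ) < d := by exact_mod_cast hd
  have hs' : (0 : ℝ) < s := by exact_mod_cast hs
  have h9' : (9 : ℝ) * s ≤ d := by exact_mod_cast h9
  choose V hV hVQ using fun x : Fin s → Fin d → ℤˣ =>
    exists_orthonormal_approx (by omega : s ≤ d) (signMat x)
  let R : (Fin s → Fin d → ℤˣ) → (Fin s → Fin d → ℤˣ) → Prop := fun x y =>
    (s : ℝ) / 2 < frobSq ((V x)ᵀ * V y)
  let G : Finset (Fin s → Fin d → ℤˣ) := Finset.univ.filter fun x =>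
    frobSq ((signMat x)ᵀ * signMat x - 1) ≤ (s : ℝ) / 8
  have hG : (2 : ℝ) ^ (d * s) ≤ 9 * G.card := by
    have h1 := sum_frobSq_gram (s := s) hd
    have h2 : ((Finset.univ.filter fun x : Fin s → Fin d → ℤˣ =>
        ¬ frobSq ((signMat x)ᵀ * signMat x - 1) ≤ (s : ℝ) / 8).card : ℝ) * (s / 8) ≤
        ∑ x : Fin s → Fin d → ℤˣ, frobSq ((signMat x)ᵀ * signMat x - 1) := by
      rw [← nsmul_eq_mul, ← Finset.sum_const]
      refine (Finset.sum_le_sum fun x hx => ?_).trans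
        (Finset.sum_le_sum_of_subset_of_nonneg (Finset.filter_subset _ _) fun x _ _ => ?_)
      · exact (not_le.1 (Finset.mem_filter.1 hx).2).le
      · exact Finset.sum_nonneg fun _ _ => Finset.sum_nonneg fun _ _ => sq_nonneg _
    have h3 := Finset.card_filter_add_card_filter_not (s := Finset.univ)
      (fun x : Fin s → Fin d → ℤˣ => frobSq ((signMat x)ᵀ * signMat x - 1) ≤ (s : ℝ) / 8)
    rw [Finset.card_univ] at h3
    have h4 : (G.card : ℝ) + ((Finset.univ.filter fun x : Fin s → Fin d → ℤˣ =>
        ¬ frobSq ((signMat x)ᵀ * signMat x - 1) ≤ (s : ℝ) / 8).card : ℝ) = 2 ^ (d * s) := by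
      rw [← card_signs]
      exact_mod_cast h3
    have h5 : (s : ℝ) ^ 2 / d ≤ s / 9 := by
      rw [div_le_div_iff₀ hd' (by norm_num)]
      nlinarith
    have h6 := h2.trans (h1.trans (mul_le_mul_of_nonneg_left h5 (by positivity)))
    have h7 : ((Finset.univ.filter fun x : Fin s → Fin d → ℤˣ =>
        ¬ frobSq ((signMat x)ᵀ * signMat x - 1) ≤ (s : ℝ) / 8).card : ℝ) ≤
        8 / 9 * 2 ^ (d * s) := by
      refine le_of_mul_le_mul_right (h6.trans_eq ?_) (by positivity : (0 : ℝ) < s / 8)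
      ring
    linarith
  have hsymm : ∀ x y, R x y → R y x := by
    intro x y h
    simp only [R] at h ⊢
    rwa [← frobSq_transpose, Matrix.transpose_mul, Matrix.transpose_transpose]
  obtain ⟨S, hSG, hS, hcard⟩ := card_greedy G R
    (fun x => by simp only [R]; rw [hV, frobSq_one]; linarith) hsymm
    (2 ^ (d * s) * Real.exp (-((d : ℝ) * s / 128))) (by
      intro x _
      refine le_trans ?_ (card_bad_le h9 (V x) (hV x))
      norm_cast
      refine Finset.card_le_card fun y hy => ?_
      obtain ⟨hyG, hxy⟩ := Finset.mem_filter.1 hy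
      have hyG := (Finset.mem_filter.1 hyG).2
      refine Finset.mem_filter.2 ⟨Finset.mem_univ _, ?_⟩
      have := hVQ y (V x) (hV x)
      simp only [R] at hxy
      linarith)
  refine ⟨S.card, ?_, fun a => V (S.equivFin.symm a), fun a => hV _, fun a b hab => ?_⟩
  · have h := hG.trans (mul_le_mul_of_nonneg_left hcard (by norm_num : (0 : ℝ) ≤ 9))
    have hp : (0 : ℝ) < 2 ^ (d * s) * Real.exp (-((d : ℝ) * s / 128)) := by positivity
    refine le_of_mul_le_mul_right ?_ hp
    calc _ = (2 : ℝ) ^ (d * s) := by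
          rw [mul_left_comm, ← Real.exp_add, add_neg_cancel, Real.exp_zero, mul_one]
      _ ≤ _ := by linarith
  · refine not_lt.1 (hS _ (S.equivFin.symm a).2 _ (S.equivFin.symm b).2 fun h => hab ?_)
    exact S.equivFin.symm.injective (Subtype.ext h)

/-- Two disjoint blocks of `s` coordinates span orthogonal subspaces. -/
lemma packing_pair {d s : ℕ} (h2 : 2 * s ≤ d) :
    ∃ U : Fin 2 → Matrix (Fin d) (Fin s) ℝ,
        (∀ a, (U a)ᵀ * U a = 1) ∧
        (∀ a b, a ≠ b → frobSq ((U a)ᵀ * U b) ≤ (s : ℝ) / 2) := by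
  let e : Fin 2 → Fin s → Fin d := fun a k => ⟨a * s + k, by
    have := a.2; have := k.2
    have : (a : ℕ) * s ≤ 1 * s := Nat.mul_le_mul_right s (by omega)
    omega⟩
  have he : ∀ a b k l, e a k = e b l ↔ a = b ∧ k = l := by
    intro a b k l
    have := k.2; have := l.2
    simp only [e, Fin.ext_iff]
    fin_cases a <;> fin_cases b <;> simp <;> omega
  have hU : ∀ a b, (Matrix.of fun i k => if i = e a k then (1 : ℝ) else 0)ᵀ *
      (Matrix.of fun i k => if i = e b k then (1 : ℝ) else 0) = if a = b then 1 else 0 := by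
    intro a b
    ext k l
    simp only [Matrix.mul_apply, Matrix.transpose_apply, Matrix.of_apply, ite_mul, one_mul,
      zero_mul, Finset.sum_ite_eq', Finset.mem_univ, if_true, he]
    by_cases hab : a = b
    · simp [hab, Matrix.one_apply]
    · simp [hab]
  refine ⟨fun a => Matrix.of fun i k => if i = e a k then (1 : ℝ) else 0, fun a => ?_,
    fun a b hab => ?_⟩
  · rw [hU, if_pos rfl]
  · rw [hU, if_neg hab]
    simp only [frobSq, Matrix.zero_apply]
    simp only [ne_eq, OfNat.ofNat_ne_zero, not_false_eq_true, zero_pow, Finset.sum_const_zero]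
    positivity

/-- There exist exponentially many `d × (d/r)` matrices with orthonormal columns that are
pairwise nearly orthogonal in Frobenius norm. -/
theorem many_nearly_orthogonal_column_spaces :
    ∃ c : ℝ, 0 < c ∧
      ∀ d r : ℕ, 9 ≤ r → r ≤ d → r ∣ d →
        ∃ M : ℕ, (2 : ℝ) ^ (c * d ^ 2 / r) ≤ (M : ℝ) ∧
          ∃ U : Fin M → Matrix (Fin d) (Fin (d / r)) ℝ,
            (∀ a, (U a)ᵀ * U a = 1) ∧
            (∀ a b, a ≠ b → frobSq ((U a)ᵀ * U b) ≤ (d : ℝ) / (2 * r)) := by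
  refine ⟨1 / 1024, by norm_num, fun d r hr hrd hdvd => ?_⟩
  have hr0 : (r : ℝ) ≠ 0 := by
    have : r ≠ 0 := by omega
    exact_mod_cast this
  have hs : 0 < d / r := Nat.div_pos hrd (by omega)
  have h9 : 9 * (d / r) ≤ d :=
    (Nat.mul_le_mul_right _ hr).trans (Nat.mul_div_cancel' hdvd).le
  have hsd : ((d / r : ℕ) : ℝ) = (d : ℝ) / r := Nat.cast_div hdvd hr0
  have hthr : (d : ℝ) / (2 * r) = ((d / r : ℕ) : ℝ) / 2 := by
    rw [hsd]
    field_simp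
  have hexp : 1 / 1024 * (d : ℝ) ^ 2 / r = d * ((d / r : ℕ) : ℝ) / 1024 := by
    rw [hsd]
    ring
  rw [hthr, hexp]
  set n : ℝ := d * ((d / r : ℕ) : ℝ) with hn
  by_cases hbig : n ≤ 1024
  · refine ⟨2, ?_, packing_pair (by omega)⟩
    calc (2 : ℝ) ^ (n / 1024) ≤ 2 ^ (1 : ℝ) :=
          Real.rpow_le_rpow_of_exponent_le one_le_two (by linarith)
      _ = ((2 : ℕ) : ℝ) := by simp
  · push Not at hbig
    obtain ⟨M, hM, hU⟩ := packing_greedy hs h9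
    refine ⟨M, ?_, hU⟩
    rw [← hn] at hM
    -- `exp (n / 128) = exp (n / 1024) * exp (7 * n / 1024)`, and the second factor is at least `9`
    have h1 : (2 : ℝ) ^ (n / 1024) ≤ Real.exp (n / 1024) := by
      rw [Real.rpow_def_of_pos two_pos]
      apply Real.exp_le_exp.2
      have hl : Real.log 2 ≤ 1 := Real.log_two_lt_d9.le.trans (by norm_num)
      nlinarith
    have h2 : Real.exp (n / 128) = Real.exp (n / 1024) * Real.exp (7 * n / 1024) := by
      rw [← Real.exp_add]
      congr 1
      ring
    have h3 : (9 : ℝ) ≤ Real.exp (7 * n / 1024) := by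
      have he : (2 : ℝ) ≤ Real.exp 1 := by linarith [Real.add_one_le_exp (1 : ℝ)]
      calc (9 : ℝ) ≤ 2 ^ 7 := by norm_num
        _ ≤ Real.exp 1 ^ 7 := by gcongr
        _ = Real.exp 7 := by rw [← Real.exp_nat_mul]; norm_num
        _ ≤ _ := Real.exp_le_exp.2 (by linarith)
    nlinarith [Real.exp_pos (n / 1024)]
end

section
/- Let (Z, ν) be a measure space, let g and f₁,…,f_k be probability density functions on Z (with respect to ν), let w = (w₁,…,w_k) ∈ Δ_k, set f = Σ_{i=1}^k wᵢ fᵢ, and suppose ‖g − f‖_{L¹(ν)} ≤ ρ for some ρ ≥ 0. Then there exist probability density functions g₁,…,g_k on Z with g = Σ_{i=1}^k wᵢ gᵢ (ν-almost everywhere) such that, for every r > 0, Σ_{i : ‖gᵢ − fᵢ‖_{L¹(ν)} > r} wᵢ ≤ ρ/r. -/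
open MeasureTheory

/-!
Let `f = ∑ wᵢ fᵢ` and `m = min f g`. The common part `m` is shared among the components in
proportion to `wᵢ fᵢ`: with `hᵢ = fᵢ m / f ≤ fᵢ` one has `∑ wᵢ hᵢ = m`. Component `i` then lacks
mass `δᵢ = ∫ (fᵢ - hᵢ)`, and the excess `g - m` has total mass `τ = ∑ wᵢ δᵢ`, so putting
`gᵢ = hᵢ + (δᵢ / τ) (g - m)` restores every mass to `1` and the mixture to `g`.
Since `‖gᵢ - fᵢ‖₁ ≤ 2 δᵢ`, the average `∑ wᵢ ‖gᵢ - fᵢ‖₁` is at most `2 τ = ‖g - f‖₁ ≤ ρ`, and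
Markov's inequality for the weights `wᵢ` gives the tail bound. If `τ = 0`, then `g = f` almost
everywhere and `gᵢ = fᵢ` works.
-/

/-- Markov's inequality for finitely many weights. -/
lemma markov_weights {k : ℕ} (w D : Fin k → ℝ) (hw : ∀ i, 0 ≤ w i) (hD : ∀ i, 0 ≤ D i)
    {ρ : ℝ} (h : ∑ i, w i * D i ≤ ρ) (r : ℝ) (hr : 0 < r) :
    ∑ i, Set.indicator {i | r < D i} w i ≤ ρ / r := by
  rw [le_div_iff₀ hr, Finset.sum_mul]
  refine le_trans (Finset.sum_le_sum fun i _ => ?_) h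
  by_cases hi : r < D i
  · rw [Set.indicator_of_mem (by exact hi)]
    exact mul_le_mul_of_nonneg_left hi.le (hw i)
  · rw [Set.indicator_of_notMem (by exact hi), zero_mul]
    exact mul_nonneg (hw i) (hD i)

lemma integrable_of_integral_eq_one_real {Z : Type*} [MeasurableSpace Z] {ν : Measure Z} {f : Z → ℝ}
    (h : ∫ z, f z ∂ν = 1) : Integrable f ν := by
  by_contra hf
  rw [integral_undef hf] at h
  exact zero_ne_one h

/-- Decomposition of an approximate mixture: if `g` is `ρ`-close in `L¹(ν)` to the mixture
`∑ wᵢ fᵢ`, then `g` can itself be written as a mixture `∑ wᵢ gᵢ` of densities in which the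
total weight of components with `‖gᵢ − fᵢ‖₁ > r` is at most `ρ/r`. -/
theorem approximate_mixture_decomposition
    {Z : Type*} [MeasurableSpace Z] (ν : Measure Z) (k : ℕ)
    (g : Z → ℝ) (fs : Fin k → Z → ℝ) (w : Fin k → ℝ)
    (hgmeas : Measurable g) (hgnn : ∀ z, 0 ≤ g z) (hgint : ∫ z, g z ∂ν = 1)
    (hfmeas : ∀ i, Measurable (fs i)) (hfnn : ∀ i z, 0 ≤ fs i z)
    (hfint : ∀ i, ∫ z, fs i z ∂ν = 1)
    (hwnn : ∀ i, 0 ≤ w i) (hwsum : ∑ i, w i = 1)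
    (ρ : ℝ) (hρ : 0 ≤ ρ)
    (hclose : ∫ z, |g z - ∑ i, w i * fs i z| ∂ν ≤ ρ) :
    ∃ gs : Fin k → Z → ℝ,
      (∀ i, Measurable (gs i)) ∧ (∀ i z, 0 ≤ gs i z) ∧ (∀ i, ∫ z, gs i z ∂ν = 1) ∧
      (g =ᵐ[ν] fun z => ∑ i, w i * gs i z) ∧
      ∀ r : ℝ, 0 < r →
        ∑ i, Set.indicator {i | r < ∫ z, |gs i z - fs i z| ∂ν} w i ≤ ρ / r := by
  have hgI : Integrable g ν := integrable_of_integral_eq_one_real hgint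
  have hfI : ∀ i, Integrable (fs i) ν := fun i => integrable_of_integral_eq_one_real (hfint i)
  obtain ⟨f, hf⟩ : ∃ f : Z → ℝ, f = fun z => ∑ i, w i * fs i z := ⟨_, rfl⟩
  have hfz : ∀ z, ∑ i, w i * fs i z = f z := fun z => by rw [hf]
  simp only [hfz] at hclose
  have hFm : Measurable f := by
    rw [hf]; exact Finset.measurable_fun_sum _ fun i _ => (hfmeas i).const_mul _
  have hFI : Integrable f ν := by
    rw [hf]; exact integrable_finsetSum _ fun i _ => (hfI i).const_mul _
  have hFnn : ∀ z, 0 ≤ f z := fun z => by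
    rw [← hfz]; exact Finset.sum_nonneg fun i _ => mul_nonneg (hwnn i) (hfnn i z)
  have hFint : ∫ z, f z ∂ν = 1 := by
    rw [hf, integral_finsetSum _ fun i _ => (hfI i).const_mul _]
    simp [integral_const_mul, hfint, hwsum]
  have hmI : Integrable (fun z => min (f z) (g z)) ν := hFI.inf hgI
  have heI : Integrable (fun z => g z - min (f z) (g z)) ν := hgI.sub hmI
  obtain ⟨τ, hτ⟩ : ∃ τ, τ = ∫ z, (g z - min (f z) (g z)) ∂ν := ⟨_, rfl⟩
  have hτm : τ = 1 - ∫ z, min (f z) (g z) ∂ν := by rw [hτ, integral_sub hgI hmI, hgint]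
  have hL1 : ∫ z, |g z - f z| ∂ν = 2 * τ := by
    have : ∀ z, |g z - f z| = (f z - min (f z) (g z)) + (g z - min (f z) (g z)) := fun z => by
      rcases le_total (f z) (g z) with h | h
      · rw [min_eq_left h, abs_of_nonneg (by linarith)]; ring
      · rw [min_eq_right h, abs_of_nonpos (by linarith)]; ring
    simp only [this]
    rw [integral_add (f := fun z => f z - min (f z) (g z)) (hFI.sub hmI) heI, integral_sub hFI hmI, ← hτ, hFint, ← hτm]
    ring
  have hτnn : 0 ≤ τ := by
    rw [hτ]; exact integral_nonneg fun z => sub_nonneg.2 (min_le_right _ _)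
  rcases hτnn.eq_or_lt with h0 | hτpos
  · refine ⟨fs, hfmeas, hfnn, hfint, ?_, fun r hr => ?_⟩
    · rw [← h0, mul_zero, integral_eq_zero_iff_of_nonneg (fun z => abs_nonneg _)
        (show Integrable (fun z => |g z - f z|) ν from (hgI.sub hFI).abs)] at hL1
      filter_upwards [hL1] with z hz
      rw [hfz]
      exact sub_eq_zero.1 (abs_eq_zero.1 hz)
    · exact markov_weights w _ hwnn (fun i => integral_nonneg fun z => abs_nonneg _)
        (by simpa using hρ) r hr
  -- The quotient is the share of `f z` that is retained; it is `0` where `f z = 0`.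
  obtain ⟨h, hh⟩ : ∃ h : Fin k → Z → ℝ, h = fun i z => fs i z * (min (f z) (g z) / f z) :=
    ⟨_, rfl⟩
  have hhm : ∀ i, Measurable (h i) := fun i => by
    rw [hh]; exact (hfmeas i).mul ((hFm.min hgmeas).div hFm)
  have hhnn : ∀ i z, 0 ≤ h i z := fun i z => by
    rw [hh]; exact mul_nonneg (hfnn i z) (div_nonneg (le_min (hFnn z) (hgnn z)) (hFnn z))
  have hhle : ∀ i z, h i z ≤ fs i z := fun i z => by
    rw [hh]
    exact mul_le_of_le_one_right (hfnn i z) (div_le_one_of_le₀ (min_le_left _ _) (hFnn z))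
  have hhI : ∀ i, Integrable (h i) ν := fun i =>
    (hfI i).mono' (hhm i).aestronglyMeasurable
      (.of_forall fun z => by rw [Real.norm_of_nonneg (hhnn i z)]; exact hhle i z)
  have hhsum : ∀ z, ∑ i, w i * h i z = min (f z) (g z) := fun z => by
    simp only [hh, ← mul_assoc]
    rw [← Finset.sum_mul, hfz]
    rcases eq_or_ne (f z) 0 with h | h
    · simp [h, hgnn z]
    · exact mul_div_cancel₀ _ h
  obtain ⟨δ, hδ⟩ : ∃ δ : Fin k → ℝ, δ = fun i => ∫ z, (fs i z - h i z) ∂ν := ⟨_, rfl⟩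
  have hδi : ∀ i, ∫ z, (fs i z - h i z) ∂ν = δ i := fun i => by rw [hδ]
  have hδh : ∀ i, ∫ z, h i z ∂ν = 1 - δ i := fun i => by
    rw [← hδi, integral_sub (hfI i) (hhI i), hfint]; ring
  have hδnn : ∀ i, 0 ≤ δ i := fun i => by
    rw [← hδi]; exact integral_nonneg fun z => sub_nonneg.2 (hhle i z)
  have hδsum : ∑ i, w i * δ i = τ := by
    have : ∫ z, min (f z) (g z) ∂ν = ∑ i, w i * (1 - δ i) := by
      simp only [← hhsum]
      rw [integral_finsetSum _ fun i _ => (hhI i).const_mul _]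
      simp only [integral_const_mul, hδh]
    rw [hτm, this]
    simp only [mul_sub, Finset.sum_sub_distrib, mul_one, hwsum]
    ring
  have hc : ∀ i, 0 ≤ δ i / τ := fun i => div_nonneg (hδnn i) hτnn
  have hce : ∀ i z, 0 ≤ δ i / τ * (g z - min (f z) (g z)) := fun i z =>
    mul_nonneg (hc i) (sub_nonneg.2 (min_le_right _ _))
  have hcI : ∀ i, ∫ z, δ i / τ * (g z - min (f z) (g z)) ∂ν = δ i := fun i => by
    rw [integral_const_mul, ← hτ, div_mul_cancel₀ _ hτpos.ne']
  refine ⟨fun i z => h i z + δ i / τ * (g z - min (f z) (g z)),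
    fun i => (hhm i).add ((hgmeas.sub (hFm.min hgmeas)).const_mul _),
    fun i z => add_nonneg (hhnn i z) (hce i z), fun i => ?_, .of_forall fun z => ?_, ?_⟩
  · rw [integral_add (hhI i) (heI.const_mul _), hcI, hδh]; ring
  · simp only [mul_add, Finset.sum_add_distrib, hhsum, ← mul_assoc, ← Finset.sum_mul,
      ← mul_div_assoc, ← Finset.sum_div, hδsum, div_self hτpos.ne']
    ring
  · refine markov_weights w _ hwnn (fun i => integral_nonneg fun z => abs_nonneg _) ?_
    have hD : ∀ i, ∫ z, |h i z + δ i / τ * (g z - min (f z) (g z)) - fs i z| ∂ν ≤ 2 * δ i := by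
      intro i
      have hle : ∫ z, |h i z + δ i / τ * (g z - min (f z) (g z)) - fs i z| ∂ν ≤
          ∫ z, ((fs i z - h i z) + δ i / τ * (g z - min (f z) (g z))) ∂ν := by
        refine integral_mono (((hhI i).add (heI.const_mul _)).sub (hfI i)).abs
          (((hfI i).sub (hhI i)).add (heI.const_mul _)) fun z => ?_
        have h1 := hce i z
        have h2 := hhle i z
        exact abs_le.2 ⟨by linarith, by linarith⟩
      rw [integral_add (f := fun z => fs i z - h i z) ((hfI i).sub (hhI i)) (heI.const_mul _), hcI, hδi] at hle
      linarith
    calc _ ≤ ∑ i, w i * (2 * δ i) :=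
          Finset.sum_le_sum fun i _ => mul_le_mul_of_nonneg_left (hD i) (hwnn i)
      _ = 2 * τ := by rw [← hδsum, Finset.mul_sum]; exact Finset.sum_congr rfl fun i _ => by ring
      _ ≤ ρ := hL1 ▸ hclose
end

section
/- Let I ⊆ ℝ be a measurable set with Lebesgue measure at least γ > 0, let α, β > 0, and let f, h : ℝ → [0,∞) be measurable probability density functions such that f(x) ≥ β and h(x) ≤ α for all x ∈ I, and f(x) > 0 for all x ∈ ℝ. Then KL(f ‖ h) ≥ γ·β·log(β/α) − 1/e. -/
/-!
The elementary inequality `u * log u ≥ -1/e`, applied to `u = f/h` and multiplied by `h`, gives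
`f * log (f/h) ≥ -h/e` wherever `h > 0`. On `I` moreover, if `β ≥ α` then
`f * log (f/h) ≥ β * log (β/α)`. Hence almost everywhere
`f * log (f/h) ≥ 1_I * β * max 0 (log (β/α)) - h/e`; integrating, with `∫ h = 1` and
`γ ≤ volume I`, yields the bound.
-/

open MeasureTheory

/-- The bound `u * log u ≥ -1/e` in homogeneous form, with `u = a / b`. -/
lemma neg_div_exp_le_mul_log_div {a b : ℝ} (ha : 0 < a) (hb : 0 < b) :
    -(b / Real.exp 1) ≤ a * Real.log (a / b) := by
  have h1 := Real.one_sub_inv_le_log_of_pos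
    (show 0 < a / b * Real.exp 1 by positivity)
  rw [Real.log_mul (by positivity) (by positivity), Real.log_exp] at h1
  have h2 : -(a / b * Real.exp 1)⁻¹ ≤ Real.log (a / b) := by linarith
  have h3 := mul_le_mul_of_nonneg_left h2 ha.le
  have h4 : a * -(a / b * Real.exp 1)⁻¹ = -(b / Real.exp 1) := by field_simp
  linarith

/-- If `f ≥ β` and `h ≤ α` on a set `I` of Lebesgue measure at least `γ`, and `f > 0`
everywhere, then `KL(f ‖ h) ≥ γ·β·log(β/α) − 1/e`. -/
theorem kl_lower_bound_from_separated_set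
    (I : Set ℝ) (hI : MeasurableSet I) (γ α β : ℝ)
    (hγ : 0 < γ) (hα : 0 < α) (hβ : 0 < β)
    (hIγ : ENNReal.ofReal γ ≤ volume I)
    (f h : ℝ → ℝ)
    (hfmeas : Measurable f) (hfnn : ∀ x, 0 ≤ f x) (hfint : ∫ x, f x = 1)
    (hhmeas : Measurable h) (hhnn : ∀ x, 0 ≤ h x) (hhint : ∫ x, h x = 1)
    (hfI : ∀ x ∈ I, β ≤ f x) (hhI : ∀ x ∈ I, h x ≤ α)
    (hfpos : ∀ x, 0 < f x) :
    ((γ * β * Real.log (β / α) - 1 / Real.exp 1 : ℝ) : EReal) ≤ klDivFun f h := by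
  unfold klDivFun
  split_ifs with hc
  swap
  · exact le_top
  obtain ⟨hnull, hint⟩ := hc
  rw [EReal.coe_le_coe_iff]
  -- A nonzero Bochner integral forces integrability.
  have hf : Integrable f := Integrable.of_integral_ne_zero (by simp [hfint])
  have hh : Integrable h := Integrable.of_integral_ne_zero (by simp [hhint])
  have hfin : volume I < ⊤ := by
    have := hf.measure_ge_lt_top hβ
    exact (measure_mono (fun x hx => hfI x hx)).trans_lt this
  have hγI : γ ≤ volume.real I := (ENNReal.ofReal_le_iff_le_toReal hfin.ne).1 hIγ
  set c := max 0 (Real.log (β / α)) with hcdef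
  have hc0 : 0 ≤ c := le_max_left _ _
  have hind : Integrable (I.indicator fun _ => β * c) :=
    (integrable_indicator_iff hI).2 (integrableOn_const hfin.ne)
  have hhe : Integrable (fun x => h x / Real.exp 1) := hh.div_const _
  have hpos : ∀ᵐ x, 0 < h x := by
    refine measure_mono_null (fun x hx => ?_) hnull
    exact ⟨le_antisymm (not_lt.1 hx) (hhnn x), hfpos x⟩
  have key : ∫ x, (I.indicator (fun _ => β * c) x - h x / Real.exp 1)
      ≤ ∫ x, f x * Real.log (f x / h x) := by
    refine integral_mono_ae (hind.sub hhe) hint ?_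
    filter_upwards [hpos] with x hx
    have hlow := neg_div_exp_le_mul_log_div (hfpos x) hx
    by_cases hxI : x ∈ I
    · simp only [Set.indicator_of_mem hxI]
      rcases le_total (Real.log (β / α)) 0 with hl | hl
      · rw [hcdef, max_eq_left hl]
        linarith
      · rw [hcdef, max_eq_right hl]
        have hlog : Real.log (β / α) ≤ Real.log (f x / h x) :=
          Real.log_le_log (by positivity)
            (div_le_div₀ (hfnn x) (hfI x hxI) hx (hhI x hxI))
        have := mul_le_mul (hfI x hxI) hlog hl (hfnn x)
        have : 0 ≤ h x / Real.exp 1 := by positivity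
        linarith
    · simp only [Set.indicator_of_notMem hxI]
      linarith
  rw [integral_sub hind hhe, integral_indicator_const _ hI, integral_div, hhint,
    smul_eq_mul] at key
  have h1 : γ * (β * c) ≤ volume.real I * (β * c) :=
    mul_le_mul_of_nonneg_right hγI (by positivity)
  have h2 : γ * β * Real.log (β / α) ≤ γ * β * c :=
    mul_le_mul_of_nonneg_left (le_max_right _ _) (by positivity)
  linarith
end

section
/- Let μ, μ̂ ∈ ℝ, let σ > 0, σ̂ ≥ 0, and let ε ∈ [0, 2/3]. If |μ̂ − μ| ≤ ε·σ and |σ̂ − σ| ≤ ε·σ, then the L¹ distance between the one-dimensional Gaussian densities satisfies ‖N(μ, σ²) − N(μ̂, σ̂²)‖₁ ≤ 2ε; equivalently, TV(N(μ, σ²), N(μ̂, σ̂²)) ≤ ε. -/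
/-!
The bound is Pinsker's inequality applied to the closed form of the Kullback–Leibler divergence.
With `s = σhat / σ` and `δ = (μhat - μ) / σ`,
`KL(N(μhat, σhat²) ‖ N(μ, σ²)) = (s² + δ² - 1) / 2 - log s`.
Writing `s = 1 + t`, the elementary inequality `t - t² ≤ log (1 + t)`, which holds for `t ≥ -2/3`
(`sub_sq_le_log_one_add`) and is the reason for the restriction `ε ≤ 2/3`, bounds this by
`(3 t² + δ²) / 2 ≤ 2 ε²`. In particular `σhat > 0`, so no Dirac mass occurs.

Pinsker's inequality (`abs_measureReal_sub_le_of_integral_le`) is proved one event `A` at a time.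
If `dQ/dP = exp (-L)`, integrating `u + 1 ≤ exp u` against `P` with `u = f - L` gives the
Gibbs variational bound `E_P f - E_P L + 1 ≤ E_Q (exp f)`. For `f = l (1_A - Q A) - l² / 8` the right
side is at most `1` by Hoeffding's lemma, so `l (P A - Q A) - l² / 8 ≤ E_P L`, and
`l = 4 (P A - Q A)` is the optimal choice.
-/

open MeasureTheory ProbabilityTheory

/-- Total variation distance between two measures:
`sup_A |μ(A) − ν(A)|` over measurable sets `A`. -/
noncomputable def tvDist {α : Type*} [MeasurableSpace α] (μ ν : Measure α) : ℝ :=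
  ⨆ (s : Set α) (_ : MeasurableSet s), |(μ s).toReal - (ν s).toReal|

/-- On `[-2/3, 0]` the difference `log (1 + t) - t + t²` increases up to `t = -1/2` and then
decreases to `0`, so its sign is decided at the end point `-2/3`, where it reads
`log 3 ≤ 10 / 9`. -/
lemma sub_sq_le_log_one_add {t : ℝ} (ht : -(2 / 3) ≤ t) : t - t ^ 2 ≤ Real.log (1 + t) := by
  rcases le_total 0 t with h0 | h0
  · have h1 : 0 < 1 + t := by linarith
    refine le_trans ?_ (Real.one_sub_inv_le_log_of_pos h1)
    have h2 : 1 - (1 + t)⁻¹ - (t - t ^ 2) = t ^ 3 / (1 + t) := by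
      field_simp
      ring
    have h3 : 0 ≤ t ^ 3 / (1 + t) := by positivity
    linarith
  · set g : ℝ → ℝ := fun x => Real.log (1 + x) - x + x ^ 2 with hg
    have hd : ∀ x : ℝ, 0 < 1 + x → HasDerivAt g (x * (1 + 2 * x) / (1 + x)) x := by
      intro x hx
      have h := (((((hasDerivAt_id x).const_add 1).log hx.ne').sub (hasDerivAt_id x)).add
        ((hasDerivAt_id x).pow 2))
      refine (h.congr_deriv ?_)
      simp only [id]
      field_simp
      ring
    suffices h : 0 ≤ g t by simp only [hg] at h; linarith
    rcases le_total t (-(1 / 2)) with h1 | h1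
    · have hm : MonotoneOn g (Set.Icc (-(2 / 3)) (-(1 / 2))) := by
        refine monotoneOn_of_hasDerivWithinAt_nonneg (convex_Icc _ _)
          (fun x hx => (hd x (by linarith [hx.1])).continuousAt.continuousWithinAt)
          (fun x hx => (hd x ?_).hasDerivWithinAt) ?_
        · rw [interior_Icc] at hx
          linarith [hx.1]
        · intro x hx
          rw [interior_Icc] at hx
          have ha : 0 < 1 + x := by linarith [hx.1]
          exact div_nonneg (by nlinarith [hx.1, hx.2]) ha.le
      have h2 := hm (Set.left_mem_Icc.2 (by norm_num)) ⟨ht, h1⟩ ht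
      refine le_trans ?_ h2
      have h3 : Real.log (1 + -(2 / 3)) = - Real.log 3 := by
        rw [← Real.log_inv]
        norm_num
      simp only [hg, h3]
      linarith [Real.log_three_lt_d9]
    · have hm : AntitoneOn g (Set.Icc (-(1 / 2)) 0) := by
        refine antitoneOn_of_hasDerivWithinAt_nonpos (convex_Icc _ _)
          (fun x hx => (hd x (by linarith [hx.1])).continuousAt.continuousWithinAt)
          (fun x hx => (hd x ?_).hasDerivWithinAt) ?_
        · rw [interior_Icc] at hx
          linarith [hx.1]
        · intro x hx
          rw [interior_Icc] at hx
          have ha : 0 < 1 + x := by linarith [hx.1]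
          exact div_nonpos_of_nonpos_of_nonneg (by nlinarith [hx.1, hx.2]) ha.le
      have h2 := hm ⟨h1, h0⟩ (Set.right_mem_Icc.2 (by norm_num)) h0
      simpa [hg] using h2

/-- Pinsker's inequality for a single event. The function `L` is the log-likelihood ratio
`log (dP/dQ)`, so that `∫ x, L x ∂P` is the Kullback–Leibler divergence of `P` from `Q`. -/
lemma abs_measureReal_sub_le_of_integral_le {α : Type*} [MeasurableSpace α] {P Q : Measure α}
    [IsProbabilityMeasure P] [IsProbabilityMeasure Q] {L : α → ℝ} (hL : Measurable L)
    (hLi : Integrable L P) (hQ : Q = P.withDensity (fun x => ENNReal.ofReal (Real.exp (-L x))))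
    {ε : ℝ} (hε : 0 ≤ ε) (hK : ∫ x, L x ∂P ≤ 2 * ε ^ 2) {A : Set α} (hA : MeasurableSet A) :
    |Q.real A - P.real A| ≤ ε := by
  set X : α → ℝ := A.indicator 1 with hX
  have hXm : Measurable X := measurable_one.indicator hA
  have hXI : ∀ x, X x ∈ Set.Icc (0 : ℝ) 1 := fun x => by
    by_cases hx : x ∈ A <;> simp [hX, hx]
  have hXP : ∫ x, X x ∂P = P.real A := integral_indicator_one hA
  have hXQ : ∫ x, X x ∂Q = Q.real A := integral_indicator_one hA
  have hXi : Integrable X P :=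
    Integrable.of_mem_Icc 0 1 hXm.aemeasurable (Filter.Eventually.of_forall hXI)
  have hsub := hasSubgaussianMGF_of_mem_Icc (μ := Q) hXm.aemeasurable
    (Filter.Eventually.of_forall hXI)
  rw [hXQ] at hsub
  have key : ∀ l : ℝ, l * (P.real A - Q.real A) - l ^ 2 / 8 ≤ ∫ x, L x ∂P := by
    intro l
    set f : α → ℝ := fun x => l * (X x - Q.real A) - l ^ 2 / 8 with hf
    have hfi : Integrable f P :=
      ((hXi.sub (integrable_const _)).const_mul l).sub (integrable_const _)
    have hexp : ∀ x, Real.exp (f x)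
        = Real.exp (l * (X x - Q.real A)) * Real.exp (-(l ^ 2 / 8)) := fun x => by
      rw [← Real.exp_add]
      rfl
    have hQi : Integrable (fun x => Real.exp (f x)) Q := by
      simp only [hexp]
      exact (hsub.integrable_exp_mul l).mul_const _
    have hQle : ∫ x, Real.exp (f x) ∂Q ≤ 1 := by
      simp only [hexp]
      rw [integral_mul_const]
      have h := hsub.mgf_le l
      rw [mgf] at h
      calc _ ≤ Real.exp (l ^ 2 / 8) * Real.exp (-(l ^ 2 / 8)) := by
            gcongr
            refine h.trans (le_of_eq ?_)
            congr 1
            simp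
            ring
        _ = 1 := by rw [← Real.exp_add]; simp
    have hdm : Measurable fun x => ENNReal.ofReal (Real.exp (-L x)) := by fun_prop
    have hdf : ∀ᵐ x ∂P, ENNReal.ofReal (Real.exp (-L x)) < ⊤ := by simp
    have hmul : ∀ x, (ENNReal.ofReal (Real.exp (-L x))).toReal • Real.exp (f x)
        = Real.exp (f x - L x) := fun x => by
      rw [ENNReal.toReal_ofReal (Real.exp_pos _).le, smul_eq_mul, ← Real.exp_add]
      ring_nf
    have hPi : Integrable (fun x => Real.exp (f x - L x)) P := by
      rw [hQ, integrable_withDensity_iff_integrable_smul' hdm hdf] at hQi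
      simpa only [hmul] using hQi
    have hPle : ∫ x, Real.exp (f x - L x) ∂P ≤ 1 := by
      rw [hQ, integral_withDensity_eq_integral_toReal_smul hdm hdf] at hQle
      simpa only [hmul] using hQle
    have hmono : ∫ x, (f x - L x + 1) ∂P ≤ ∫ x, Real.exp (f x - L x) ∂P :=
      integral_mono ((hfi.sub hLi).add (integrable_const _)) hPi
        (fun x => Real.add_one_le_exp _)
    have hcomp : ∫ x, (f x - L x + 1) ∂P
        = l * (P.real A - Q.real A) - l ^ 2 / 8 - ∫ x, L x ∂P + 1 := by
      have hfL : Integrable (fun x => f x - L x) P := hfi.sub hLi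
      have hXl : Integrable (fun x => l * (X x - Q.real A)) P :=
        (hXi.sub (integrable_const _)).const_mul l
      rw [integral_add hfL (integrable_const _), integral_sub hfi hLi]
      simp only [hf]
      rw [integral_sub hXl (integrable_const _),
        integral_const_mul, integral_sub hXi (integrable_const _), hXP]
      simp
    linarith
  have h := key (4 * (P.real A - Q.real A))
  refine abs_le_of_sq_le_sq ?_ hε
  nlinarith

/-- The log-likelihood ratio of `N(m', s²)` with respect to `N(m, σ²)`. -/
noncomputable def gaussianLLR (m m' σ s : ℝ) (x : ℝ) : ℝ :=
  Real.log σ - Real.log s + (x - m) ^ 2 / (2 * σ ^ 2) - (x - m') ^ 2 / (2 * s ^ 2)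

lemma gaussianReal_eq_withDensity_exp_neg_gaussianLLR (m m' : ℝ) {σ s : ℝ} (hσ : 0 < σ)
    (hs : 0 < s) :
    gaussianReal m (σ ^ 2).toNNReal = (gaussianReal m' (s ^ 2).toNNReal).withDensity
      (fun x => ENNReal.ofReal (Real.exp (-gaussianLLR m m' σ s x))) := by
  have hσ' : (σ ^ 2).toNNReal ≠ 0 := (Real.toNNReal_pos.2 (by positivity)).ne'
  have hs' : (s ^ 2).toNNReal ≠ 0 := (Real.toNNReal_pos.2 (by positivity)).ne'
  rw [gaussianReal_of_var_ne_zero _ hσ', gaussianReal_of_var_ne_zero _ hs',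
    ← withDensity_mul _ (measurable_gaussianPDF _ _) (by unfold gaussianLLR; fun_prop)]
  congr 1
  ext1 x
  rw [Pi.mul_apply, gaussianPDF, gaussianPDF, ← ENNReal.ofReal_mul (gaussianPDFReal_nonneg _ _ _)]
  congr 1
  have hsplit : Real.exp (-gaussianLLR m m' σ s x)
      = s / σ * (Real.exp (-(x - m) ^ 2 / (2 * σ ^ 2)) * Real.exp ((x - m') ^ 2 / (2 * s ^ 2))) := by
    rw [← Real.exp_add, ← Real.exp_log (div_pos hs hσ), ← Real.exp_add,
      Real.log_div hs.ne' hσ.ne', gaussianLLR]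
    congr 1
    ring
  have hcancel : Real.exp (-(x - m') ^ 2 / (2 * s ^ 2)) * Real.exp ((x - m') ^ 2 / (2 * s ^ 2))
      = 1 := by
    rw [← Real.exp_add, neg_div, neg_add_cancel, Real.exp_zero]
  rw [hsplit, gaussianPDFReal, gaussianPDFReal, Real.coe_toNNReal _ (sq_nonneg _),
    Real.coe_toNNReal _ (sq_nonneg _), Real.sqrt_mul (by positivity) (σ ^ 2),
    Real.sqrt_mul (by positivity) (s ^ 2),
    Real.sqrt_sq hσ.le, Real.sqrt_sq hs.le]
  calc _ = (√(2 * Real.pi) * s)⁻¹ * (s / σ) * Real.exp (-(x - m) ^ 2 / (2 * σ ^ 2)) * 1 := by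
        field_simp
    _ = _ := by rw [← hcancel]; ring

lemma integrable_sub_sq_gaussianReal (m : ℝ) (v : NNReal) (a : ℝ) :
    Integrable (fun x => (x - a) ^ 2) (gaussianReal m v) :=
  ((memLp_id_gaussianReal (μ := m) (v := v) 2).sub (memLp_const a)).integrable_sq

lemma integral_sub_sq_gaussianReal (m : ℝ) (v : NNReal) (a : ℝ) :
    ∫ x, (x - a) ^ 2 ∂gaussianReal m v = v + (m - a) ^ 2 := by
  have hid : Integrable (fun x : ℝ => x) (gaussianReal m v) :=
    (memLp_id_gaussianReal (μ := m) (v := v) 1).integrable le_rfl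
  have hv : ∫ x, (x - m) ^ 2 ∂gaussianReal m v = v := by
    have h := variance_fun_id_gaussianReal (μ := m) (v := v)
    rwa [variance_eq_integral measurable_id'.aemeasurable, integral_id_gaussianReal] at h
  have hlin : Integrable (fun x : ℝ => 2 * (m - a) * (x - m)) (gaussianReal m v) :=
    (hid.sub (integrable_const _)).const_mul _
  have hsum : Integrable (fun x : ℝ => (x - m) ^ 2 + 2 * (m - a) * (x - m)) (gaussianReal m v) :=
    (integrable_sub_sq_gaussianReal m v m).add hlin
  calc ∫ x, (x - a) ^ 2 ∂gaussianReal m v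
      = ∫ x, ((x - m) ^ 2 + 2 * (m - a) * (x - m) + (m - a) ^ 2) ∂gaussianReal m v := by
        congr 1
        ext x
        ring
    _ = _ := by
        rw [integral_add hsum (integrable_const _),
          integral_add (integrable_sub_sq_gaussianReal m v m) hlin, hv, integral_const_mul,
          integral_sub hid (integrable_const _), integral_id_gaussianReal]
        simp

lemma integrable_gaussianLLR (m m' σ s : ℝ) (v : NNReal) :
    Integrable (gaussianLLR m m' σ s) (gaussianReal m' v) :=
  ((integrable_const _).add ((integrable_sub_sq_gaussianReal m' v m).div_const _)).sub
    ((integrable_sub_sq_gaussianReal m' v m').div_const _)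

/-- The Kullback–Leibler divergence of `N(m', s²)` from `N(m, σ²)`. -/
lemma integral_gaussianLLR (m m' σ : ℝ) {s : ℝ} (hs : 0 < s) :
    ∫ x, gaussianLLR m m' σ s x ∂gaussianReal m' (s ^ 2).toNNReal
      = Real.log σ - Real.log s + (s ^ 2 + (m' - m) ^ 2) / (2 * σ ^ 2) - 1 / 2 := by
  have hsum : Integrable (fun x : ℝ => Real.log σ - Real.log s + (x - m) ^ 2 / (2 * σ ^ 2))
      (gaussianReal m' (s ^ 2).toNNReal) :=
    (integrable_const _).add ((integrable_sub_sq_gaussianReal m' _ m).div_const _)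
  simp only [gaussianLLR]
  rw [integral_sub hsum
      ((integrable_sub_sq_gaussianReal m' _ m').div_const _),
    integral_add (integrable_const _) ((integrable_sub_sq_gaussianReal m' _ m).div_const _),
    integral_div, integral_div, integral_sub_sq_gaussianReal, integral_sub_sq_gaussianReal,
    Real.coe_toNNReal _ (sq_nonneg _)]
  simp only [integral_const, probReal_univ, one_smul, sub_self]
  field_simp
  ring

/-- If `|μ̂ − μ| ≤ ε·σ` and `|σ̂ − σ| ≤ ε·σ` with `ε ≤ 2/3`, then the one-dimensional
Gaussians `N(μ, σ²)` and `N(μ̂, σ̂²)` are within total variation distance `ε`. -/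
theorem gaussian_tv_one_dim
    (μ μhat σ σhat ε : ℝ) (hσ : 0 < σ) (hσhat : 0 ≤ σhat)
    (hε0 : 0 ≤ ε) (hε1 : ε ≤ 2 / 3)
    (hμ : |μhat - μ| ≤ ε * σ) (hσd : |σhat - σ| ≤ ε * σ) :
    tvDist (gaussianReal μ ((σ ^ 2).toNNReal)) (gaussianReal μhat ((σhat ^ 2).toNNReal))
      ≤ ε := by
  have hs : 0 < σhat := by nlinarith [(abs_le.1 hσd).1]
  -- `t` and `δ` are the relative errors of the standard deviation and of the mean.
  obtain ⟨t, ht⟩ : ∃ t, σhat = σ * (1 + t) := ⟨σhat / σ - 1, by field_simp; ring⟩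
  obtain ⟨δ, hδ⟩ : ∃ δ, μhat - μ = σ * δ := ⟨(μhat - μ) / σ, by field_simp⟩
  have htε : |t| ≤ ε := by
    have h : |σhat - σ| = |t| * σ := by
      rw [ht, show σ * (1 + t) - σ = t * σ by ring, abs_mul, abs_of_pos hσ]
    rw [h] at hσd
    exact le_of_mul_le_mul_right hσd hσ
  have hδε : |δ| ≤ ε := by
    rw [hδ, mul_comm, abs_mul, abs_of_pos hσ] at hμ
    exact le_of_mul_le_mul_right hμ hσ
  have hlog := sub_sq_le_log_one_add (t := t) (by linarith [(abs_le.1 htε).1])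
  have h1t : 0 < 1 + t := by linarith [(abs_le.1 htε).1]
  have hKL : ∫ x, gaussianLLR μ μhat σ σhat x ∂gaussianReal μhat (σhat ^ 2).toNNReal
      ≤ 2 * ε ^ 2 := by
    have hq : (σhat ^ 2 + (μhat - μ) ^ 2) / (2 * σ ^ 2) = ((1 + t) ^ 2 + δ ^ 2) / 2 := by
      rw [hδ, ht]
      field_simp
    have hl : Real.log σhat = Real.log σ + Real.log (1 + t) := by
      rw [ht, Real.log_mul hσ.ne' h1t.ne']
    rw [integral_gaussianLLR _ _ _ hs, hq, hl]
    have h1 : t ^ 2 ≤ ε ^ 2 := sq_le_sq' (abs_le.1 htε).1 (abs_le.1 htε).2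
    have h2 : δ ^ 2 ≤ ε ^ 2 := sq_le_sq' (abs_le.1 hδε).1 (abs_le.1 hδε).2
    linarith
  refine Real.iSup_le (fun A => Real.iSup_le (fun hA => ?_) hε0) hε0
  exact abs_measureReal_sub_le_of_integral_le (by unfold gaussianLLR; fun_prop)
    (integrable_gaussianLLR _ _ _ _ _)
    (gaussianReal_eq_withDensity_exp_neg_gaussianLLR μ μhat hσ hs) hε0 hKL hA
end

section
/- Let n, m be positive integers, let p = (p₁,…,p_{2n+1}) and q = (q₁,…,q_{2n+1}) be probability vectors in Δ_{2n+1} with Σ_{i=1}^{2n+1} |p_i − q_i| ≤ t. Let X₁,…,X_m be i.i.d. random variables taking values in {1,…,2n+1} with law q (ball j lands in bin X_j). Then the probability of the event that for every i ∈ {1,…,n} at most one of the two bins 2i−1 and 2i receives at least one ball is at most 2^n · ( t/2 + p_{2n+1} + Σ_{i=1}^n max{p_{2i−1}, p_{2i}} )^m. -/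
open MeasureTheory

/-!
If every pair has an empty bin, there is a choice `σ : Fin n → Fin 2` of one bin per pair such that
all balls land in the unpaired bin or in the chosen ones; call this set of bins `chosenBins σ`.
A union bound over the `2 ^ n` choices leaves the probability `q (chosenBins σ) ^ m`, and
`q (chosenBins σ) ≤ t / 2 + p (chosenBins σ)` because the total variation distance of two
probability vectors is half their `ℓ¹` distance (`sum_ite_le_half_add`).
-/

/-- The unpaired bin together with the bin `(i, σ i)` of each pair. -/
def chosenBins {n : ℕ} (σ : Fin n → Fin 2) : Set ((Fin n × Fin 2) ⊕ Unit) :=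
  {b | ∀ i c, b = Sum.inl (i, c) → c = σ i}

/-- The `ℓ¹` form of the total variation bound: `q S - p S ≤ t / 2` for vectors of equal mass. -/
lemma sum_ite_le_half_add {β : Type*} [Fintype β] (S : Set β) [DecidablePred (· ∈ S)]
    (p q : β → ℝ) (t : ℝ) (hsum : ∑ b, p b = ∑ b, q b) (hpq : ∑ b, |p b - q b| ≤ t) :
    ∑ b, (if b ∈ S then q b else 0) ≤ t / 2 + ∑ b, (if b ∈ S then p b else 0) := by
  -- The positive part of `q b - p b` is `(|p b - q b| + (q b - p b)) / 2`.
  have h : ∀ b, (if b ∈ S then q b else 0) ≤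
      (if b ∈ S then p b else 0) + (|p b - q b| + (q b - p b)) / 2 := by
    intro b
    have h1 := le_abs_self (p b - q b)
    have h2 := neg_abs_le (p b - q b)
    split_ifs <;> linarith
  have h' := Finset.sum_le_sum fun b (_ : b ∈ Finset.univ) => h b
  rw [Finset.sum_add_distrib, ← Finset.sum_div, Finset.sum_add_distrib,
    Finset.sum_sub_distrib] at h'
  linarith

lemma measure_sum_dirac {β : Type*} [Fintype β] [MeasurableSpace β] (S : Set β)
    [DecidablePred (· ∈ S)] (hS : MeasurableSet S) (q : β → ℝ) (hq : ∀ b, 0 ≤ q b) :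
    (∑ b, ENNReal.ofReal (q b) • Measure.dirac b) S
      = ENNReal.ofReal (∑ b, if b ∈ S then q b else 0) := by
  rw [ENNReal.ofReal_sum_of_nonneg (fun b _ => by split_ifs <;> simp [hq]),
    Measure.finsetSum_apply]
  refine Finset.sum_congr rfl fun b _ => ?_
  by_cases h : b ∈ S <;> simp [Measure.dirac_apply' _ hS, h]

lemma sum_chosenBins_le {n : ℕ} (σ : Fin n → Fin 2) [DecidablePred (· ∈ chosenBins σ)]
    (p : (Fin n × Fin 2) ⊕ Unit → ℝ) :
    ∑ b, (if b ∈ chosenBins σ then p b else 0) ≤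
      p (Sum.inr ()) + ∑ i : Fin n, max (p (Sum.inl (i, 0))) (p (Sum.inl (i, 1))) := by
  have hl : ∀ i c, (Sum.inl (i, c) ∈ chosenBins σ) ↔ c = σ i := by
    intro i c
    refine ⟨fun h => h i c rfl, ?_⟩
    rintro rfl j d hd
    cases hd
    rfl
  have hr : Sum.inr () ∈ chosenBins σ := by simp [chosenBins]
  rw [Fintype.sum_sum_type, Fintype.sum_prod_type, add_comm]
  simp only [hl, hr, Finset.univ_unique, Finset.sum_singleton, PUnit.default_eq_unit, if_true,
    Finset.sum_ite_eq', Finset.mem_univ]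
  gcongr with i
  generalize σ i = c
  fin_cases c <;> simp

theorem balls_in_bins_pairing
    (n m : ℕ) (hn : 0 < n) (hm : 0 < m)
    (p q : (Fin n × Fin 2) ⊕ Unit → ℝ) (t : ℝ)
    (hpnn : ∀ b, 0 ≤ p b) (hpsum : ∑ b, p b = 1)
    (hqnn : ∀ b, 0 ≤ q b) (hqsum : ∑ b, q b = 1)
    (hpq : ∑ b, |p b - q b| ≤ t) :
    (Measure.pi fun _ : Fin m => ∑ b, ENNReal.ofReal (q b) • Measure.dirac b)
        {X : Fin m → (Fin n × Fin 2) ⊕ Unit |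
          ∀ i : Fin n, ¬ ((∃ j, X j = Sum.inl (i, 0)) ∧ (∃ j, X j = Sum.inl (i, 1)))}
      ≤ ENNReal.ofReal
          (2 ^ n *
            (t / 2 + p (Sum.inr ()) +
              ∑ i : Fin n, max (p (Sum.inl (i, 0))) (p (Sum.inl (i, 1)))) ^ m) := by
  classical
  set μ : Measure ((Fin n × Fin 2) ⊕ Unit) := ∑ b, ENNReal.ofReal (q b) • Measure.dirac b with hμ
  set B : ℝ := t / 2 + p (Sum.inr ()) +
    ∑ i : Fin n, max (p (Sum.inl (i, 0))) (p (Sum.inl (i, 1))) with hB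
  have : IsFiniteMeasure μ := by
    constructor
    rw [hμ, measure_sum_dirac _ MeasurableSet.univ _ hqnn]
    exact ENNReal.ofReal_lt_top
  have hB0 : 0 ≤ B := by
    have h1 : 0 ≤ t := le_trans (Finset.sum_nonneg fun b _ => abs_nonneg _) hpq
    have h2 := hpnn (Sum.inr ())
    have h3 : 0 ≤ ∑ i : Fin n, max (p (Sum.inl (i, 0))) (p (Sum.inl (i, 1))) :=
      Finset.sum_nonneg fun i _ => le_max_of_le_left (hpnn _)
    positivity
  have hμS : ∀ σ : Fin n → Fin 2, μ (chosenBins σ) ≤ ENNReal.ofReal B := by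
    intro σ
    have hmeas : MeasurableSet (chosenBins σ) :=
      measurableSet_sum_iff.2 ⟨Set.Finite.measurableSet (Set.toFinite _),
        Set.Finite.measurableSet (Set.toFinite _)⟩
    rw [hμ, measure_sum_dirac _ hmeas _ hqnn]
    apply ENNReal.ofReal_le_ofReal
    have h1 := sum_ite_le_half_add (chosenBins σ) p q t (hpsum.trans hqsum.symm) hpq
    have h2 := sum_chosenBins_le σ p
    linarith
  have hcover : {X : Fin m → (Fin n × Fin 2) ⊕ Unit |
      ∀ i : Fin n, ¬ ((∃ j, X j = Sum.inl (i, 0)) ∧ (∃ j, X j = Sum.inl (i, 1)))} ⊆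
      ⋃ σ : Fin n → Fin 2, Set.univ.pi fun _ : Fin m => chosenBins σ := by
    intro X hX
    refine Set.mem_iUnion.2 ⟨fun i => if ∃ j, X j = Sum.inl (i, 0) then 0 else 1, ?_⟩
    intro j _ i c hc
    have hi := hX i
    by_cases h0 : ∃ j, X j = Sum.inl (i, 0)
    · have h1 : ¬ ∃ j, X j = Sum.inl (i, 1) := fun h1 => hi ⟨h0, h1⟩
      simp only [h0, if_true]
      fin_cases c
      · rfl
      · exact absurd ⟨j, hc⟩ h1
    · simp only [h0, if_false]
      fin_cases c
      · exact absurd ⟨j, hc⟩ h0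
      · rfl
  calc _ ≤ (Measure.pi fun _ : Fin m => μ)
        (⋃ σ : Fin n → Fin 2, Set.univ.pi fun _ : Fin m => chosenBins σ) := measure_mono hcover
    _ ≤ ∑ σ : Fin n → Fin 2, (Measure.pi fun _ : Fin m => μ)
        (Set.univ.pi fun _ : Fin m => chosenBins σ) := measure_iUnion_fintype_le _ _
    _ ≤ ∑ _σ : Fin n → Fin 2, ENNReal.ofReal B ^ m := by
        refine Finset.sum_le_sum fun σ _ => ?_
        rw [Measure.pi_pi, Finset.prod_const, Finset.card_univ, Fintype.card_fin]
        gcongr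
        exact hμS σ
    _ = ENNReal.ofReal (2 ^ n * B ^ m) := by
        rw [ENNReal.ofReal_mul (by positivity), ENNReal.ofReal_pow hB0,
          ENNReal.ofReal_pow (by norm_num)]
        simp
end
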